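/- arXiv:1103.5519 — 2 statements merged into one kernel-verified Lean document; each statement's English description precedes it below -/
import Mathlib

section
/- Let L be an odd unimodular lattice in dimension 36 having minimum norm 3. Then the kissing number of L is at most 960, and equality holds if and only if σ(L) = 20. -/
/-!
Let `S` be the shadow of `L` and `N_k`, `r_k` the numbers of vectors of norm `k` in `L` and in `S`.
Poisson summation makes the theta series of `L` a form of weight `18` for the theta group whose
expansion at the other cusp is the theta series of `S`; in particular the norms in `S` are odd
integers. Multiplying it by `θ₃⁴ (θ₄⁴ - θ₂⁴) (θ₂θ₄)⁴ⁱ`, whose factors come from the theta series of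
`ℤ⁴` and of its shadow, cancels the sign of the functional equation, so that the trace to the full
modular group is a level one form of weight `22 + 4 i`. A form of weight `12 k + 14` that vanishes
to order `k` at the cusp is a multiple of `Δ ^ k E₁₄`, and therefore its next coefficient is
`-24 (k + 1)` times its leading one.

For `i = 1` (weight `26`) this reads `N₃ + r₃ + 60 r₁ = 960`, hence the bound, with equality exactly
when `S` has no vectors of norm `1` or `3`. In that case `i = 4` (weight `38`) gives
`r₅ = 3833856 ≠ 0`, so `S` has minimum norm `5`.
-/

open scoped RealInnerProductSpace

noncomputable section

/-- The norm `(x, x)` of a vector `x ∈ ℝⁿ` (squared Euclidean length). -/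
def normOf {n : ℕ} (x : EuclideanSpace ℝ (Fin n)) : ℝ := ⟪x, x⟫

/-- The dual `L* = {x ∈ ℝⁿ : (x,y) ∈ ℤ for all y ∈ L}` of a set of vectors. -/
def dualSet {n : ℕ} (L : Set (EuclideanSpace ℝ (Fin n))) : Set (EuclideanSpace ℝ (Fin n)) :=
  {x | ∀ y ∈ L, ∃ m : ℤ, ⟪x, y⟫ = (m : ℝ)}

/-- `L` is a unimodular lattice: `L = L*`. -/
def IsUnimodularLattice {n : ℕ} (L : Set (EuclideanSpace ℝ (Fin n))) : Prop :=
  L = dualSet L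

/-- `L` is odd: some vector of `L` has odd (integral) norm. -/
def IsOddLattice {n : ℕ} (L : Set (EuclideanSpace ℝ (Fin n))) : Prop :=
  ∃ x ∈ L, ∃ m : ℤ, Odd m ∧ normOf x = (m : ℝ)

/-- The even sublattice `L₀ = {x ∈ L : (x,x) even}`. -/
def evenSublattice {n : ℕ} (L : Set (EuclideanSpace ℝ (Fin n))) :
    Set (EuclideanSpace ℝ (Fin n)) :=
  {x | x ∈ L ∧ ∃ m : ℤ, normOf x = 2 * (m : ℝ)}

/-- The shadow `S(L) = L₀* \ L`. -/
def shadow {n : ℕ} (L : Set (EuclideanSpace ℝ (Fin n))) : Set (EuclideanSpace ℝ (Fin n)) :=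
  dualSet (evenSublattice L) \ L

/-- `L` has minimum norm `r`: `r` is the least norm among nonzero vectors of `L`. -/
def HasMinNorm {n : ℕ} (L : Set (EuclideanSpace ℝ (Fin n))) (r : ℝ) : Prop :=
  IsLeast {s : ℝ | ∃ x ∈ L, x ≠ 0 ∧ normOf x = s} r

/-- The shadow `S(L)` has minimum norm `r`. -/
def HasShadowMinNorm {n : ℕ} (L : Set (EuclideanSpace ℝ (Fin n))) (r : ℝ) : Prop :=
  IsLeast {s : ℝ | ∃ x ∈ shadow L, normOf x = s} r

/-- `σ(L) = r`, i.e. `4 · min(S(L)) = r`. -/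
def HasSigma {n : ℕ} (L : Set (EuclideanSpace ℝ (Fin n))) (r : ℝ) : Prop :=
  ∃ s : ℝ, HasShadowMinNorm L s ∧ r = 4 * s

/-- The number of vectors of norm `r` in `L`; when `L` has minimum norm `r`,
this is the kissing number of `L`. -/
def numVecsOfNorm {n : ℕ} (L : Set (EuclideanSpace ℝ (Fin n))) (r : ℝ) : ℕ :=
  Set.ncard {x ∈ L | normOf x = r}

section LevelOne

open UpperHalfPlane ModularForm ModularFormClass MatrixGroups EisensteinSeries
open scoped PowerSeries

lemma qExpansion_E₄_coeff_two : (qExpansion 1 E₄).coeff 2 = 2160 := by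
  have hσ : ArithmeticFunction.sigma 3 2 = 9 := by decide +kernel
  norm_num [E_qExpansion_coeff _ ⟨2, rfl⟩, show bernoulli 4 = -1 / 30 by decide +kernel, hσ]

lemma qExpansion_E₆_coeff_two : (qExpansion 1 E₆).coeff 2 = -16632 := by
  have hσ : ArithmeticFunction.sigma 5 2 = 33 := by decide +kernel
  norm_num [E_qExpansion_coeff _ ⟨3, rfl⟩, show bernoulli 6 = 1 / 42 by decide +kernel, hσ]

lemma discriminant_smul_eq_E₄_E₆ :
    (1728 : ℂ) • ⇑CuspForm.discriminant =
      ⇑((E₄.mul E₄).mul E₄) - ⇑(mcast (by norm_num) (E₆.mul E₆) : ModularForm 𝒮ℒ (4 + 4 + 4)) := by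
  funext z
  change (1728 : ℂ) * discriminant z = E₄ z * E₄ z * E₄ z - E₆ z * E₆ z
  rw [discriminant_eq_E₄_cube_sub_E₆_sq]
  ring

lemma qExpansion_discriminant_smul :
    (1728 : ℂ) • qExpansion 1 discriminant = qExpansion 1 E₄ ^ 3 - qExpansion 1 E₆ ^ 2 := by
  rw [← CuspForm.coe_discriminant,
    ← ModularForm.qExpansion_smul one_pos one_mem_strictPeriods_SL (1728 : ℂ) CuspForm.discriminant,
    discriminant_smul_eq_E₄_E₆, ModularForm.qExpansion_sub one_pos one_mem_strictPeriods_SL]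
  simp only [coe_mcast, ModularForm.qExpansion_mul one_pos one_mem_strictPeriods_SL]
  ring

lemma qExpansion_discriminant_coeff_two : (qExpansion 1 discriminant).coeff 2 = -24 := by
  have h := congr_arg (PowerSeries.coeff 2) qExpansion_discriminant_smul
  have a₀ := E_qExpansion_coeff_zero (k := 4) (by norm_num) ⟨2, rfl⟩
  have b₀ := E_qExpansion_coeff_zero (k := 6) (by norm_num) ⟨3, rfl⟩
  simp only [pow_succ, pow_zero, one_mul, PowerSeries.coeff_smul, smul_eq_mul, map_sub,
    PowerSeries.coeff_mul, Finset.Nat.sum_antidiagonal_succ, Finset.Nat.antidiagonal_zero,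
    Finset.sum_singleton, zero_add, Nat.reduceAdd, a₀, b₀, E₄_qExpansion_coeff_one,
    E₆_qExpansion_coeff_one, qExpansion_E₄_coeff_two, qExpansion_E₆_coeff_two] at h
  linear_combination h / 1728

lemma exists_qExpansion_discriminant_eq :
    ∃ u : ℂ⟦X⟧, qExpansion 1 discriminant = PowerSeries.X * u ∧ u.coeff 0 = 1 ∧
      u.coeff 1 = -24 := by
  have h₀ : PowerSeries.constantCoeff (qExpansion 1 discriminant) = 0 := by
    simpa using CuspFormClass.qExpansion_coeff_zero CuspForm.discriminant one_pos
      one_mem_strictPeriods_SL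
  obtain ⟨u, hu⟩ := PowerSeries.X_dvd_iff.mpr h₀
  refine ⟨u, hu, ?_, ?_⟩
  · rw [← PowerSeries.coeff_succ_X_mul, ← hu, discriminant_qExpansion_coeff_one]
  · rw [← PowerSeries.coeff_succ_X_mul, ← hu, qExpansion_discriminant_coeff_two]

lemma qExpansion_E₄_mul_E₄_mul_E₆ :
    qExpansion 1 ((E₄.mul E₄).mul E₆) = qExpansion 1 E₄ * qExpansion 1 E₄ * qExpansion 1 E₆ := by
  simp only [ModularForm.qExpansion_mul one_pos one_mem_strictPeriods_SL]

lemma qExpansion_weight_fourteen_coeff_one (f : ModularForm 𝒮ℒ 14) :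
    (qExpansion 1 f).coeff 1 = -24 * (qExpansion 1 f).coeff 0 := by
  have hrank : Module.finrank ℂ (ModularForm 𝒮ℒ 14) = 1 := by
    rw [← Module.rank_eq_one_iff_finrank_eq_one]
    simpa [Nat.ModEq] using dimension_level_one 14 (by decide)
  have a₀ := E_qExpansion_coeff_zero (k := 4) (by norm_num) ⟨2, rfl⟩
  have b₀ := E_qExpansion_coeff_zero (k := 6) (by norm_num) ⟨3, rfl⟩
  set e : ModularForm 𝒮ℒ 14 := mcast (by norm_num) ((E₄.mul E₄).mul E₆)
  have he₀ : (qExpansion 1 e).coeff 0 = 1 := by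
    simp only [e, coe_mcast, qExpansion_E₄_mul_E₄_mul_E₆, PowerSeries.coeff_mul,
      Finset.Nat.antidiagonal_zero, Finset.sum_singleton, a₀, b₀, mul_one]
  have he₁ : (qExpansion 1 e).coeff 1 = -24 := by
    simp only [e, coe_mcast, qExpansion_E₄_mul_E₄_mul_E₆, PowerSeries.coeff_mul,
      Finset.Nat.sum_antidiagonal_succ, Finset.Nat.antidiagonal_zero, Finset.sum_singleton,
      zero_add, a₀, b₀, E₄_qExpansion_coeff_one, E₆_qExpansion_coeff_one]
    norm_num
  have he : e ≠ 0 := fun h ↦ by simp [h, UpperHalfPlane.qExpansion_zero] at he₀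
  obtain ⟨c, rfl⟩ := (finrank_eq_one_iff_of_nonzero' e he).mp hrank f
  have hc : qExpansion 1 ⇑(c • e) = c • qExpansion 1 e :=
    ModularForm.qExpansion_smul one_pos one_mem_strictPeriods_SL c e
  rw [hc, PowerSeries.coeff_smul, PowerSeries.coeff_smul, he₀, he₁]
  simp only [smul_eq_mul]
  ring

lemma coeff_mul_of_X_pow_dvd {u g : ℂ⟦X⟧} {k : ℕ} (hg : PowerSeries.X ^ k ∣ g) :
    (u * g).coeff k = u.coeff 0 * g.coeff k := by
  obtain ⟨r, rfl⟩ := hg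
  have h (v : ℂ⟦X⟧) : (PowerSeries.X ^ k * v).coeff k = v.coeff 0 := by
    simpa only [zero_add] using PowerSeries.coeff_X_pow_mul v k 0
  rw [mul_left_comm, h, h, PowerSeries.coeff_mul, Finset.Nat.antidiagonal_zero,
    Finset.sum_singleton]

lemma coeff_succ_mul_of_X_pow_dvd {u g : ℂ⟦X⟧} {k : ℕ} (hg : PowerSeries.X ^ k ∣ g) :
    (u * g).coeff (k + 1) = u.coeff 0 * g.coeff (k + 1) + u.coeff 1 * g.coeff k := by
  obtain ⟨r, rfl⟩ := hg
  have h (v : ℂ⟦X⟧) (j : ℕ) : (PowerSeries.X ^ k * v).coeff (k + j) = v.coeff j := by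
    rw [add_comm, PowerSeries.coeff_X_pow_mul]
  have h₀ : (PowerSeries.X ^ k * r).coeff k = r.coeff 0 := h r 0
  rw [mul_left_comm, h, h, h₀, PowerSeries.coeff_mul, Finset.Nat.sum_antidiagonal_succ,
    Finset.Nat.antidiagonal_zero, Finset.sum_singleton]

-- Each zero at the cusp is divided out by the discriminant, which adds `-24` to the ratio of the
-- two leading coefficients.
theorem qExpansion_coeff_succ_of_X_pow_dvd (k : ℕ) {w : ℤ} (hw : w = 12 * k + 14)
    (f : ModularForm 𝒮ℒ w) (hf : PowerSeries.X ^ k ∣ qExpansion 1 f) :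
    (qExpansion 1 f).coeff (k + 1) = -24 * (k + 1) * (qExpansion 1 f).coeff k := by
  induction k generalizing w with
  | zero =>
    obtain rfl : w = 14 := by simpa using hw
    simpa using qExpansion_weight_fourteen_coeff_one f
  | succ k ih =>
    have h₀ : (qExpansion 1 f).coeff 0 = 0 := PowerSeries.X_pow_dvd_iff.mp hf 0 k.succ_pos
    set g := CuspForm.discriminantEquiv (toCuspForm f h₀)
    obtain ⟨u, hΔ, hu₀, hu₁⟩ := exists_qExpansion_discriminant_eq
    have hfg : qExpansion 1 f = PowerSeries.X * (u * qExpansion 1 g) := by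
      rw [← mul_assoc, ← hΔ]
      exact qExpansion_eq_qExpansion_discriminant_mul f h₀
    have hu : IsUnit u := PowerSeries.isUnit_iff_constantCoeff.mpr <| by
      rw [← PowerSeries.coeff_zero_eq_constantCoeff_apply, hu₀]
      exact isUnit_one
    have hg : PowerSeries.X ^ k ∣ qExpansion 1 g := by
      rw [hfg, pow_succ', mul_dvd_mul_iff_left PowerSeries.X_ne_zero] at hf
      exact hu.dvd_mul_left.mp hf
    have hlead := ih (by rw [hw]; push_cast; ring) g hg
    rw [hfg, PowerSeries.coeff_succ_X_mul, PowerSeries.coeff_succ_X_mul,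
      coeff_succ_mul_of_X_pow_dvd hg, coeff_mul_of_X_pow_dvd hg, hlead, hu₀, hu₁]
    push_cast
    ring

end LevelOne

section NomeExpansion

open UpperHalfPlane ModularForm ModularFormClass MatrixGroups
open scoped Manifold PowerSeries

/-- The nome `exp (π i τ)`, written through `Function.Periodic.qParam` so that Mathlib's theory of
cusp functions of width `2` applies. -/
def nome (τ : ℍ) : ℂ := Function.Periodic.qParam 2 τ

lemma nome_eq_exp (τ : ℍ) : nome τ = Complex.exp (Real.pi * Complex.I * τ) := by
  simp only [nome, Function.Periodic.qParam]
  congr 1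
  push_cast
  ring

lemma nome_ne_zero (τ : ℍ) : nome τ ≠ 0 := by
  rw [nome_eq_exp]
  exact Complex.exp_ne_zero _

lemma nome_T_smul (τ : ℍ) : nome (ModularGroup.T • τ) = -nome τ := by
  rw [nome_eq_exp, nome_eq_exp, modular_T_smul, coe_vadd, Complex.ofReal_one, mul_add,
    Complex.exp_add, mul_one, Complex.exp_pi_mul_I, neg_one_mul]

lemma nome_sq (τ : ℍ) : nome τ ^ 2 = Function.Periodic.qParam 1 τ := by
  simp only [nome, Function.Periodic.qParam, ← Complex.exp_nat_mul]
  congr 1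
  push_cast
  ring

lemma exists_nome_eq {q : ℂ} (hq : ‖q‖ < 1) (h₀ : q ≠ 0) : ∃ τ : ℍ, nome τ = q :=
  ⟨⟨Function.Periodic.invQParam 2 q,
    Function.Periodic.im_invQParam_pos_of_norm_lt_one two_pos hq h₀⟩,
    Function.Periodic.qParam_right_inv two_ne_zero h₀⟩

/-- `f` is the sum on the upper half plane of the power series `p` in the nome. -/
def HasNomeExpansion (f : ℍ → ℂ) (p : ℂ⟦X⟧) : Prop :=
  ∀ τ : ℍ, HasSum (fun m : ℕ ↦ p.coeff m • nome τ ^ m) (f τ)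

namespace HasNomeExpansion

variable {f g : ℍ → ℂ} {p r : ℂ⟦X⟧}

lemma add (hf : HasNomeExpansion f p) (hg : HasNomeExpansion g r) :
    HasNomeExpansion (f + g) (p + r) := fun τ ↦ by
  simpa only [map_add, add_smul, Pi.add_apply] using (hf τ).add (hg τ)

lemma neg (hf : HasNomeExpansion f p) : HasNomeExpansion (-f) (-p) := fun τ ↦ by
  simpa only [map_neg, smul_eq_mul, neg_mul, Pi.neg_apply] using (hf τ).neg

lemma sub (hf : HasNomeExpansion f p) (hg : HasNomeExpansion g r) :
    HasNomeExpansion (f - g) (p - r) := by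
  simpa only [sub_eq_add_neg] using hf.add hg.neg

lemma mul (hf : HasNomeExpansion f p) (hg : HasNomeExpansion g r) :
    HasNomeExpansion (f * g) (p * r) := fun τ ↦ by
  have hp := (hf τ).summable.norm
  have hr := (hg τ).summable.norm
  have h := (summable_norm_sum_mul_antidiagonal_of_summable_norm hp hr).of_norm.hasSum
  rw [← tsum_mul_tsum_eq_tsum_sum_antidiagonal_of_summable_norm hp hr, (hf τ).tsum_eq,
    (hg τ).tsum_eq] at h
  refine h.congr_fun fun m ↦ ?_
  rw [PowerSeries.coeff_mul, smul_eq_mul, Finset.sum_mul]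
  refine Finset.sum_congr rfl fun x hx ↦ ?_
  rw [smul_eq_mul, smul_eq_mul, ← Finset.HasAntidiagonal.mem_antidiagonal.mp hx, pow_add]
  ring

lemma one : HasNomeExpansion 1 1 := fun τ ↦ by
  simpa using hasSum_single (f := fun m : ℕ ↦ (1 : ℂ⟦X⟧).coeff m • nome τ ^ m) 0
    fun m hm ↦ by simp [PowerSeries.coeff_one, hm]

lemma pow (hf : HasNomeExpansion f p) (n : ℕ) : HasNomeExpansion (f ^ n) (p ^ n) := by
  induction n with
  | zero => simpa only [pow_zero] using one
  | succ n ih => simpa only [pow_succ] using ih.mul hf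

lemma comp_T_smul (hf : HasNomeExpansion f p) :
    HasNomeExpansion (fun τ ↦ f (ModularGroup.T • τ)) (PowerSeries.rescale (-1) p) := fun τ ↦ by
  refine (hf (ModularGroup.T • τ)).congr_fun fun m ↦ ?_
  rw [nome_T_smul, neg_pow, PowerSeries.coeff_rescale, smul_eq_mul, smul_eq_mul]
  ring

lemma T_smul_T_smul (hf : HasNomeExpansion f p) (τ : ℍ) :
    f (ModularGroup.T • ModularGroup.T • τ) = f τ := by
  refine (hf _).unique ?_
  simpa only [nome_T_smul, neg_neg] using hf τ

lemma summable (hf : HasNomeExpansion f p) {q : ℂ} (hq : ‖q‖ < 1) :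
    Summable fun m ↦ p.coeff m * q ^ m := by
  rcases eq_or_ne q 0 with rfl | h₀
  · refine summable_of_ne_finset_zero (s := {0}) fun m hm ↦ ?_
    rw [zero_pow (Finset.notMem_singleton.mp hm), mul_zero]
  · obtain ⟨τ, rfl⟩ := exists_nome_eq hq h₀
    exact (hf τ).summable

lemma hasFPowerSeriesOnBall (hf : HasNomeExpansion f p) :
    HasFPowerSeriesOnBall (fun q : ℂ ↦ ∑' m, p.coeff m * q ^ m)
      (.ofScalars ℂ fun m ↦ p.coeff m) 0 1 where
  r_le := by
    refine le_of_forall_lt_imp_le_of_dense fun r hr ↦ ?_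
    lift r to NNReal using hr.ne_top
    have hr' : ‖((r : ℝ) : ℂ)‖ < 1 := by simpa using hr
    refine FormalMultilinearSeries.le_radius_of_summable _ ?_
    simpa using (hf.summable hr').norm
  r_pos := one_pos
  hasSum {y} hy := by
    have hy' : ‖y‖ < 1 := by
      rwa [← ENNReal.coe_one, Metric.eball_coe, NNReal.coe_one, mem_ball_zero_iff] at hy
    simpa [mul_comm] using (hf.summable hy').hasSum

lemma mdifferentiable (hf : HasNomeExpansion f p) : MDiff f := by
  rw [UpperHalfPlane.mdifferentiable_iff]
  have hmaps : Set.MapsTo (Function.Periodic.qParam 2) {z : ℂ | 0 < z.im}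
      (Metric.eball (0 : ℂ) 1) := fun z hz ↦ by
    rw [← ENNReal.coe_one, Metric.eball_coe, NNReal.coe_one, mem_ball_zero_iff]
    exact Function.Periodic.norm_qParam_lt_one two_pos hz
  have hq := (Function.Periodic.differentiable_qParam (h := 2)).differentiableOn
    (s := {z : ℂ | 0 < z.im})
  refine (hf.hasFPowerSeriesOnBall.differentiableOn.comp hq hmaps).congr fun z hz ↦ ?_
  rw [Function.comp_apply, ofComplex_apply_of_im_pos hz]
  exact (hf ⟨z, hz⟩).tsum_eq.symm

lemma isBoundedAtImInfty (hf : HasNomeExpansion f p) : IsBoundedAtImInfty f :=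
  isBoundedAtImInfty_of_hasSum_qExpansion two_pos hf

lemma periodic (hf : HasNomeExpansion f p) : Function.Periodic (f ∘ ofComplex) (2 : ℝ) := by
  intro z
  by_cases hz : 0 < z.im
  · have hz₂ : 0 < (z + (2 : ℝ)).im := by simpa using hz
    rw [Function.comp_apply, Function.comp_apply, ofComplex_apply_of_im_pos hz,
      ofComplex_apply_of_im_pos hz₂, ← hf.T_smul_T_smul ⟨z, hz⟩]
    congr 1
    ext
    simp only [modular_T_smul, coe_vadd]
    push_cast
    ring
  · have hz₂ : (z + (2 : ℝ)).im ≤ 0 := by simpa using hz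
    rw [Function.comp_apply, Function.comp_apply, ofComplex_apply_of_im_nonpos hz₂,
      ofComplex_apply_of_im_nonpos (not_lt.mp hz)]

theorem unique (hp : HasNomeExpansion f p) (hr : HasNomeExpansion f r) : p = r := by
  have ha := analyticAt_cuspFunction_zero two_pos hp.periodic hp.mdifferentiable
    hp.isBoundedAtImInfty
  have hp' := hasFPowerSeriesOnBall_cuspFunction two_pos ha (c := fun m ↦ p.coeff m) hp
  have hr' := hasFPowerSeriesOnBall_cuspFunction two_pos ha (c := fun m ↦ r.coeff m) hr
  ext m
  simpa using congr_arg (FormalMultilinearSeries.coeff · m)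
    (hp'.hasFPowerSeriesAt.eq_formalMultilinearSeries hr'.hasFPowerSeriesAt)

end HasNomeExpansion

lemma exists_modularForm_coe_eq {f : ℍ → ℂ} {k : ℤ} (hd : MDiff f) (hb : IsBoundedAtImInfty f)
    (hS : ∀ τ : ℍ, f (ModularGroup.S • τ) = (τ : ℂ) ^ k * f τ)
    (hT : ∀ τ : ℍ, f (ModularGroup.T • τ) = f τ) : ∃ F : ModularForm 𝒮ℒ k, ⇑F = f := by
  have hS' : f ∣[k] ModularGroup.S = f := by
    ext τ
    rw [SL_slash_apply, hS, ModularGroup.denom_S, zpow_neg, mul_comm, ← mul_assoc,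
      inv_mul_cancel₀ (zpow_ne_zero _ τ.ne_zero), one_mul]
  have hT' : f ∣[k] ModularGroup.T = f := by
    ext τ
    rw [SL_slash_apply, hT, ModularGroup.denom_apply]
    simp [ModularGroup.T]
  have hinv := SlashInvariantForm.slash_action_generators_SL2Z hS' hT'
  refine ⟨{ toFun := f, slash_action_eq' := ?_, holo' := hd, bdd_at_cusps' := ?_ }, rfl⟩
  · rintro _ ⟨γ, rfl⟩
    exact hinv γ
  · intro c hc
    rw [Subgroup.IsArithmetic.isCusp_iff_isCusp_SL2Z] at hc
    rw [OnePoint.isBoundedAt_iff_forall_SL2Z hc]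
    intro γ _
    rw [hinv γ]
    exact hb

lemma hasNomeExpansion_modularForm {k : ℤ} (F : ModularForm 𝒮ℒ k) :
    HasNomeExpansion F
      (PowerSeries.mk fun j ↦ if Even j then (qExpansion 1 F).coeff (j / 2) else 0) := by
  intro τ
  rw [← (mul_right_injective₀ two_ne_zero).hasSum_iff (f := fun j ↦ _)]
  · refine (ModularForm.hasSum_qExpansion F one_pos one_mem_strictPeriods_SL τ).congr_fun
      fun j ↦ ?_
    simp [← nome_sq, pow_mul]
  · intro j hj
    have hodd : ¬Even j := fun hev ↦ hj ⟨j / 2, Nat.two_mul_div_two_of_even hev⟩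
    rw [PowerSeries.coeff_mk, if_neg hodd, zero_smul]

lemma qExpansion_coeff_eq_of_hasNomeExpansion {k : ℤ} {F : ModularForm 𝒮ℒ k} {p : ℂ⟦X⟧}
    (hF : HasNomeExpansion F p) (m : ℕ) : (qExpansion 1 F).coeff m = p.coeff (2 * m) := by
  rw [hF.unique (hasNomeExpansion_modularForm F)]
  simp

end NomeExpansion

section ThetaPair

open UpperHalfPlane ModularForm ModularFormClass MatrixGroups
open scoped PowerSeries

/-- `f` is a form of weight `k` and sign `ε` for the theta group `⟨S, T²⟩`, and `g` is, up to the
factor `ε τ ^ k`, its expansion at the other cusp of that group. The theta series of a unimodular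
lattice and of its shadow form such a pair. -/
structure IsThetaPair (ε : ℂ) (k : ℕ) (f g : ℍ → ℂ) : Prop where
  map_T_smul_T_smul : ∀ τ : ℍ, f (ModularGroup.T • ModularGroup.T • τ) = f τ
  map_S_smul : ∀ τ : ℍ, f (ModularGroup.S • τ) = ε * (τ : ℂ) ^ k * f τ
  map_T_smul_S_smul : ∀ τ : ℍ, f (ModularGroup.T • ModularGroup.S • τ) = ε * (τ : ℂ) ^ k * g τ

lemma coe_S_smul (τ : ℍ) : ((ModularGroup.S • τ : ℍ) : ℂ) = -1 / τ := by
  rw [modular_S_smul, coe_mk, inv_neg, neg_div, one_div]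

lemma coe_T_smul (τ : ℍ) : ((ModularGroup.T • τ : ℍ) : ℂ) = τ + 1 := by
  rw [modular_T_smul, coe_vadd, Complex.ofReal_one, add_comm]

lemma S_smul_S_smul (τ : ℍ) : ModularGroup.S • ModularGroup.S • τ = τ := by
  ext
  have hτ := τ.ne_zero
  rw [coe_S_smul, coe_S_smul]
  field_simp

namespace IsThetaPair

variable {ε δ : ℂ} {k l : ℕ} {f g f' g' : ℍ → ℂ} {p r : ℂ⟦X⟧}

lemma mul (h : IsThetaPair ε k f g) (h' : IsThetaPair δ l f' g') :
    IsThetaPair (ε * δ) (k + l) (f * f') (g * g') where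
  map_T_smul_T_smul τ := by
    simp only [Pi.mul_apply, h.map_T_smul_T_smul, h'.map_T_smul_T_smul]
  map_S_smul τ := by
    simp only [Pi.mul_apply, h.map_S_smul, h'.map_S_smul]
    ring
  map_T_smul_S_smul τ := by
    simp only [Pi.mul_apply, h.map_T_smul_S_smul, h'.map_T_smul_S_smul]
    ring

lemma one : IsThetaPair 1 0 1 1 := by
  constructor <;> simp

lemma pow (h : IsThetaPair ε k f g) (n : ℕ) : IsThetaPair (ε ^ n) (n * k) (f ^ n) (g ^ n) := by
  induction n with
  | zero => simpa only [pow_zero, zero_mul] using one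
  | succ n ih => simpa only [pow_succ, add_mul, one_mul] using ih.mul h

lemma apply_T_smul (h : IsThetaPair ε k f g) (hε : ε ^ 2 = 1) (τ : ℍ) :
    g (ModularGroup.T • τ) = ε * g τ := by
  set s : ℍ := ModularGroup.T • ModularGroup.S • ModularGroup.T • τ
  have hτ := τ.ne_zero
  have hτ₁ : (τ : ℂ) + 1 ≠ 0 := by
    rw [← coe_T_smul]
    exact ne_zero _
  have hs : (s : ℂ) = τ / (τ + 1) := by
    rw [coe_T_smul, coe_S_smul, coe_T_smul]
    field_simp
    ring
  have hTTS : ModularGroup.T • ModularGroup.T • ModularGroup.S • s =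
      ModularGroup.T • ModularGroup.S • τ := by
    ext
    simp only [coe_T_smul, coe_S_smul, hs]
    field_simp
    ring
  have h₁ := h.map_T_smul_S_smul (ModularGroup.T • τ)
  have h₂ := h.map_S_smul s
  rw [← h.map_T_smul_T_smul, hTTS, h.map_T_smul_S_smul, h₁, hs, coe_T_smul, div_pow] at h₂
  field_simp at h₂
  linear_combination -h₂ - g (ModularGroup.T • τ) * hε

lemma apply_S_smul (h : IsThetaPair ε k f g) (hε : ε ^ 2 = 1) (hk : Even k) (τ : ℍ) :
    g (ModularGroup.S • τ) = ε * (τ : ℂ) ^ k * f (ModularGroup.T • τ) := by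
  have hτ := pow_ne_zero k τ.ne_zero
  have h' := h.map_T_smul_S_smul (ModularGroup.S • τ)
  rw [S_smul_S_smul, coe_S_smul, div_pow, hk.neg_one_pow] at h'
  field_simp at h'
  linear_combination -ε * h' - g (ModularGroup.S • τ) * hε

-- The modular form is the trace of `f` from the theta group to the full modular group.
theorem exists_modularForm_coeff_eq (h : IsThetaPair 1 k f g) (hk : Even k)
    (hf : HasNomeExpansion f p) (hg : HasNomeExpansion g r) :
    ∃ F : ModularForm 𝒮ℒ k,
      ∀ m, (qExpansion 1 F).coeff m = 2 * p.coeff (2 * m) + r.coeff (2 * m) := by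
  have htr := (hf.add hf.comp_T_smul).add hg
  obtain ⟨F, hF⟩ := exists_modularForm_coe_eq (k := k) htr.mdifferentiable htr.isBoundedAtImInfty
    (fun τ ↦ by
      simp only [Pi.add_apply, h.map_S_smul, h.map_T_smul_S_smul,
        h.apply_S_smul (one_pow 2) hk, zpow_natCast]
      ring)
    (fun τ ↦ by
      simp only [Pi.add_apply, h.map_T_smul_T_smul, h.apply_T_smul (one_pow 2)]
      ring)
  refine ⟨F, fun m ↦ ?_⟩
  rw [qExpansion_coeff_eq_of_hasNomeExpansion (hF ▸ htr)]
  simp only [map_add, PowerSeries.coeff_rescale, (even_two_mul m).neg_one_pow]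
  ring

theorem coeff_relation (h : IsThetaPair 1 k f g) (hf : HasNomeExpansion f p)
    (hg : HasNomeExpansion g r) {j : ℕ} (hk : k = 12 * j + 14)
    (hj : ∀ i < j, 2 * p.coeff (2 * i) + r.coeff (2 * i) = 0) :
    2 * p.coeff (2 * (j + 1)) + r.coeff (2 * (j + 1)) =
      -24 * (j + 1) * (2 * p.coeff (2 * j) + r.coeff (2 * j)) := by
  have heven : Even k := ⟨6 * j + 7, by rw [hk]; ring⟩
  obtain ⟨F, hF⟩ := h.exists_modularForm_coeff_eq heven hf hg
  simp only [← hF] at hj ⊢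
  exact qExpansion_coeff_succ_of_X_pow_dvd j (by exact_mod_cast hk) F
    (PowerSeries.X_pow_dvd_iff.mpr hj)

end IsThetaPair

end ThetaPair

section PoissonSummation

open MeasureTheory UnitAddTorus

variable {ι : Type*}

/-- The inclusion of the integer vectors into `ι → ℝ`. -/
def intVec : (ι → ℤ) →+ (ι → ℝ) := (Int.castAddHom ℝ).compLeft ι

@[simp]
lemma intVec_apply (m : ι → ℤ) (i : ι) : intVec m i = m i := rfl

/-- The projection of `ι → ℝ` onto the torus. -/
def toTorus (x : ι → ℝ) : UnitAddTorus ι := fun i ↦ (x i : UnitAddCircle)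

lemma isOpenQuotientMap_toTorus : IsOpenQuotientMap (toTorus (ι := ι)) :=
  IsOpenQuotientMap.piMap fun _ ↦ QuotientAddGroup.isOpenQuotientMap_mk

lemma toTorus_add_intVec (x : ι → ℝ) (m : ι → ℤ) : toTorus (x + intVec m) = toTorus x := by
  funext i
  simp [toTorus]

lemma exists_eq_add_intVec_of_toTorus_eq {x y : ι → ℝ} (h : toTorus x = toTorus y) :
    ∃ m : ι → ℤ, y = x + intVec m := by
  have hcoord (i : ι) : ∃ m : ℤ, y i = x i + m := by
    obtain ⟨m, hm⟩ := AddSubgroup.mem_zmultiples_iff.mp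
      (QuotientAddGroup.eq_iff_sub_mem.mp (congrFun h i).symm)
    exact ⟨m, by rw [← sub_eq_iff_eq_add', ← hm, zsmul_one]⟩
  choose m hm using hcoord
  exact ⟨m, funext hm⟩

/-- The sum of the translates of `g` by all integer vectors. -/
def periodization (g : (ι → ℝ) → ℂ) (x : ι → ℝ) : ℂ := ∑' m : ι → ℤ, g (x + intVec m)

lemma periodization_add_intVec (g : (ι → ℝ) → ℂ) (x : ι → ℝ) (k : ι → ℤ) :
    periodization g (x + intVec k) = periodization g x := by
  rw [periodization, periodization, ← (Equiv.addLeft k).tsum_eq fun m ↦ g (x + intVec m)]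
  exact tsum_congr fun m ↦ by rw [Equiv.coe_addLeft, map_add, add_assoc]

/-- On every compact set the translates of `g` by integer vectors are dominated by a summable
family, as the Weierstrass test for the periodization of `g` requires. -/
def HasDominatedTranslates (g : (ι → ℝ) → ℂ) : Prop :=
  ∀ K : Set (ι → ℝ), IsCompact K →
    ∃ u : (ι → ℤ) → ℝ, Summable u ∧ ∀ x ∈ K, ∀ m, ‖g (x + intVec m)‖ ≤ u m

variable {g : (ι → ℝ) → ℂ}

lemma HasDominatedTranslates.continuous_periodization [Finite ι]
    (hg : HasDominatedTranslates g) (hc : Continuous g) : Continuous (periodization g) := by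
  refine continuous_iff_continuousAt.mpr fun x ↦ ?_
  obtain ⟨K, hK, hxK⟩ := exists_compact_mem_nhds x
  obtain ⟨u, hu, hle⟩ := hg K hK
  have hon : ContinuousOn (periodization g) K :=
    continuousOn_tsum (fun m ↦ (hc.comp (continuous_add_const (intVec m))).continuousOn) hu
      fun m y hy ↦ hle y hy m
  exact hon.continuousAt hxK

lemma HasDominatedTranslates.exists_continuousMap_toTorus [Finite ι]
    (hg : HasDominatedTranslates g) (hc : Continuous g) :
    ∃ F : C(UnitAddTorus ι, ℂ), ∀ x, F (toTorus x) = periodization g x := by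
  have hq : Topology.IsQuotientMap (toTorus (ι := ι)) := isOpenQuotientMap_toTorus.isQuotientMap
  let π : C(ι → ℝ, UnitAddTorus ι) := ⟨toTorus, hq.continuous⟩
  have hπ : Topology.IsQuotientMap π := hq
  let P : C(ι → ℝ, ℂ) := ⟨periodization g, hg.continuous_periodization hc⟩
  have hP (x y : ι → ℝ) (hxy : π x = π y) : P x = P y := by
    obtain ⟨m, rfl⟩ := exists_eq_add_intVec_of_toTorus_eq hxy
    exact (periodization_add_intVec g x m).symm
  exact ⟨hπ.lift P hP, fun x ↦ DFunLike.congr_fun (hπ.lift_comp P hP) x⟩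

/-- The half-open unit cube with least corner `m`. -/
def integerCube (m : ι → ℤ) : Set (ι → ℝ) := Set.univ.pi fun i ↦ Set.Ioc (m i : ℝ) (m i + 1)

lemma measurableSet_integerCube [Finite ι] (m : ι → ℤ) : MeasurableSet (integerCube m) :=
  MeasurableSet.univ_pi fun _ ↦ measurableSet_Ioc

lemma pairwise_disjoint_integerCube :
    Pairwise (Function.onFun Disjoint (integerCube (ι := ι))) := fun m n hmn ↦ by
  obtain ⟨i, hi⟩ := Function.ne_iff.mp hmn
  exact Set.disjoint_univ_pi.mpr ⟨i, Set.pairwise_disjoint_Ioc_intCast ℝ hi⟩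

lemma iUnion_integerCube : ⋃ m, integerCube (ι := ι) m = Set.univ := by
  simp only [integerCube]
  rw [Set.iUnion_univ_pi fun (_ : ι) (k : ℤ) ↦ Set.Ioc (k : ℝ) (k + 1)]
  simp only [iUnion_Ioc_intCast, Set.pi_univ]

lemma preimage_add_intVec_integerCube (m : ι → ℤ) :
    (· + intVec m) ⁻¹' integerCube m = integerCube 0 := by
  ext x
  simp only [integerCube, Set.mem_preimage, Set.mem_univ_pi, Pi.add_apply, intVec_apply,
    Set.mem_Ioc, Pi.zero_apply, Int.cast_zero, zero_add, add_comm (x _),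
    add_le_add_iff_left, lt_add_iff_pos_right]

lemma integerCube_zero_subset_Icc : integerCube (ι := ι) 0 ⊆ Set.Icc 0 1 := fun x hx ↦ by
  simp only [integerCube, Set.mem_univ_pi, Pi.zero_apply, Int.cast_zero, zero_add] at hx
  exact ⟨fun i ↦ (hx i).1.le, fun i ↦ (hx i).2⟩

variable [Fintype ι]

lemma mFourier_toTorus (k : ι → ℤ) (x : ι → ℝ) :
    mFourier k (toTorus x) = Complex.exp (2 * Real.pi * Complex.I * ∑ i, (k i : ℂ) * x i) := by
  simp only [mFourier, ContinuousMap.coe_mk, toTorus, fourier_coe_apply]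
  rw [← Complex.exp_sum, Finset.mul_sum]
  congr 1
  refine Finset.sum_congr rfl fun i _ ↦ ?_
  push_cast
  ring

lemma norm_mFourier_apply_le (k : ι → ℤ) (t : UnitAddTorus ι) : ‖mFourier k t‖ ≤ 1 :=
  ((mFourier k).norm_coe_le_norm t).trans mFourier_norm.le

lemma hasSum_setIntegral_integerCube {h : (ι → ℝ) → ℂ} (hh : Integrable h) :
    HasSum (fun m ↦ ∫ x in integerCube 0, h (x + intVec m)) (∫ x, h x) := by
  have hsum := hasSum_integral_iUnion measurableSet_integerCube pairwise_disjoint_integerCube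
    (hh.integrableOn (s := ⋃ m, integerCube m))
  rw [iUnion_integerCube, setIntegral_univ] at hsum
  refine hsum.congr_fun fun m ↦ ?_
  rw [← preimage_add_intVec_integerCube m]
  exact (measurePreserving_add_right volume (intVec m)).setIntegral_preimage_emb
    (measurableEmbedding_addRight (intVec m)) h (integerCube m)

lemma HasDominatedTranslates.hasSum_setIntegral_mFourier_mul (hg : HasDominatedTranslates g)
    (hc : Continuous g) (k : ι → ℤ) :
    HasSum (fun m ↦ ∫ x in integerCube 0, mFourier k (toTorus x) * g (x + intVec m))
      (∫ x in integerCube 0, mFourier k (toTorus x) * periodization g x) := by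
  obtain ⟨u, hu, hle⟩ := hg (Set.Icc 0 1) isCompact_Icc
  have hle' (x) (hx : x ∈ integerCube 0) (m : ι → ℤ) : ‖g (x + intVec m)‖ ≤ u m :=
    hle x (integerCube_zero_subset_Icc hx) m
  have hfinite : volume (integerCube (ι := ι) 0) ≠ ⊤ :=
    ((measure_mono integerCube_zero_subset_Icc).trans_lt isCompact_Icc.measure_lt_top).ne
  have hmeas := measurableSet_integerCube (0 : ι → ℤ)
  have htorus : Continuous fun x : ι → ℝ ↦ mFourier k (toTorus x) :=
    (mFourier k).continuous.comp isOpenQuotientMap_toTorus.continuous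
  refine hasSum_integral_of_dominated_convergence (fun m _ ↦ u m) (fun m ↦ ?_) (fun m ↦ ?_)
    (Filter.Eventually.of_forall fun _ ↦ hu) (integrableOn_const hfinite) ?_
  · exact (htorus.mul (hc.comp (continuous_add_const (intVec m)))).aestronglyMeasurable
  · refine (ae_restrict_iff' hmeas).mpr (Filter.Eventually.of_forall fun x hx ↦ ?_)
    rw [norm_mul]
    exact (mul_le_of_le_one_left (norm_nonneg _) (norm_mFourier_apply_le k _)).trans (hle' x hx m)
  · refine (ae_restrict_iff' hmeas).mpr (Filter.Eventually.of_forall fun x hx ↦ ?_)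
    exact (Summable.of_norm_bounded hu (hle' x hx)).hasSum.mul_left _

lemma HasDominatedTranslates.mFourierCoeff_eq (hg : HasDominatedTranslates g) (hc : Continuous g)
    (hi : Integrable g) {F : UnitAddTorus ι → ℂ} (hF : ∀ x, F (toTorus x) = periodization g x)
    (k : ι → ℤ) : mFourierCoeff F k = ∫ x, mFourier (-k) (toTorus x) * g x := by
  have hcube : {x : ι → ℝ | ∀ i, x i ∈ Set.Ioc ((0 : ι → ℝ) i) ((0 : ι → ℝ) i + 1)} =
      integerCube 0 := by
    ext x
    simp [integerCube]
  have hint : Integrable fun x ↦ mFourier (-k) (toTorus x) * g x :=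
    hi.bdd_mul (c := 1) ((mFourier (-k)).continuous.comp
      isOpenQuotientMap_toTorus.continuous).aestronglyMeasurable
      (Filter.Eventually.of_forall fun x ↦ norm_mFourier_apply_le _ _)
  have hunfold := hasSum_setIntegral_integerCube hint
  simp only [toTorus_add_intVec] at hunfold
  rw [mFourierCoeff_eq_integral F k 0, hcube, ← (hg.hasSum_setIntegral_mFourier_mul hc (-k)).unique
    hunfold]
  exact setIntegral_congr_fun (measurableSet_integerCube 0) fun x _ ↦
    congr_arg (mFourier (-k) (toTorus x) * ·) (hF x)

theorem HasDominatedTranslates.hasSum_integral_mul_mFourier (hg : HasDominatedTranslates g)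
    (hc : Continuous g) (hi : Integrable g)
    (hs : Summable fun k : ι → ℤ ↦ ∫ x, mFourier (-k) (toTorus x) * g x) (x : ι → ℝ) :
    HasSum (fun k : ι → ℤ ↦ (∫ y, mFourier (-k) (toTorus y) * g y) * mFourier k (toTorus x))
      (∑' m : ι → ℤ, g (x + intVec m)) := by
  obtain ⟨F, hF⟩ := hg.exists_continuousMap_toTorus hc
  have hcoeff : mFourierCoeff F = fun k ↦ ∫ x, mFourier (-k) (toTorus x) * g x :=
    funext (hg.mFourierCoeff_eq hc hi hF)
  have hsum := hasSum_mFourier_series_apply_of_summable (hcoeff ▸ hs) (toTorus x)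
  simp only [hcoeff, smul_eq_mul] at hsum
  rwa [hF] at hsum

end PoissonSummation

section UnimodularLattice

variable {n : ℕ} {L : Set (EuclideanSpace ℝ (Fin n))}

lemma normOf_eq_norm_sq (x : EuclideanSpace ℝ (Fin n)) : normOf x = ‖x‖ ^ 2 :=
  real_inner_self_eq_norm_sq x

namespace IsUnimodularLattice

lemma mem_iff (h : IsUnimodularLattice L) {x : EuclideanSpace ℝ (Fin n)} :
    x ∈ L ↔ ∀ y ∈ L, ∃ m : ℤ, ⟪x, y⟫ = m :=
  Set.ext_iff.mp h x

/-- A unimodular lattice as a `ℤ`-submodule, which gives access to the theory of `ℤ`-lattices. -/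
def toSubmodule (h : IsUnimodularLattice L) : Submodule ℤ (EuclideanSpace ℝ (Fin n)) :=
  AddSubgroup.toIntSubmodule
    { carrier := L
      zero_mem' := h.mem_iff.mpr fun y _ ↦ ⟨0, by rw [inner_zero_left, Int.cast_zero]⟩
      add_mem' := fun {x x'} hx hx' ↦ h.mem_iff.mpr fun y hy ↦ by
        obtain ⟨m, hm⟩ := h.mem_iff.mp hx y hy
        obtain ⟨m', hm'⟩ := h.mem_iff.mp hx' y hy
        exact ⟨m + m', by rw [inner_add_left, hm, hm', Int.cast_add]⟩
      neg_mem' := fun {x} hx ↦ h.mem_iff.mpr fun y hy ↦ by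
        obtain ⟨m, hm⟩ := h.mem_iff.mp hx y hy
        exact ⟨-m, by rw [inner_neg_left, hm, Int.cast_neg]⟩ }

lemma exists_normOf_eq_natCast (h : IsUnimodularLattice L) {x : EuclideanSpace ℝ (Fin n)}
    (hx : x ∈ L) : ∃ m : ℕ, normOf x = m := by
  obtain ⟨m, hm⟩ := h.mem_iff.mp hx x hx
  have hm₀ : (0 : ℝ) ≤ m := hm ▸ real_inner_self_nonneg
  lift m to ℕ using by exact_mod_cast hm₀
  exact ⟨m, by exact_mod_cast hm⟩

lemma one_le_norm (h : IsUnimodularLattice L) {x : EuclideanSpace ℝ (Fin n)} (hx : x ∈ L)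
    (hx₀ : x ≠ 0) : 1 ≤ ‖x‖ := by
  obtain ⟨m, hm⟩ := h.exists_normOf_eq_natCast hx
  rw [normOf_eq_norm_sq] at hm
  have hm₀ : m ≠ 0 := by
    rintro rfl
    exact hx₀ (by simpa using hm)
  refine (one_le_sq_iff₀ (norm_nonneg x)).mp ?_
  rw [hm]
  exact_mod_cast Nat.one_le_iff_ne_zero.mpr hm₀

lemma discreteTopology (h : IsUnimodularLattice L) : DiscreteTopology h.toSubmodule :=
  .of_forall_le_dist one_pos fun x y hxy ↦ by
    beta_reduce
    rw [Subtype.dist_eq, dist_eq_norm]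
    exact h.one_le_norm (h.toSubmodule.sub_mem x.2 y.2)
      (sub_ne_zero.mpr fun hxy' ↦ hxy (Subtype.ext hxy'))

lemma span_real_eq_top (h : IsUnimodularLattice L) : Submodule.span ℝ L = ⊤ := by
  rw [← Submodule.orthogonal_eq_bot_iff, Submodule.eq_bot_iff]
  intro v hv
  by_contra hv₀
  have hline (t : ℝ) : t • v ∈ L := h.mem_iff.mpr fun y hy ↦ ⟨0, by
    rw [real_inner_smul_left, real_inner_comm,
      (Submodule.mem_orthogonal _ v).mp hv y (Submodule.subset_span hy), mul_zero, Int.cast_zero]⟩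
  have hv₁ := norm_ne_zero_iff.mpr hv₀
  have hnorm : ‖(2 * ‖v‖)⁻¹ • v‖ = 1 / 2 := by
    rw [norm_smul, norm_inv, norm_mul, norm_norm, Real.norm_two]
    field_simp
  have hle := h.one_le_norm (hline (2 * ‖v‖)⁻¹) (smul_ne_zero (by positivity) hv₀)
  rw [hnorm] at hle
  linarith

lemma isZLattice (h : IsUnimodularLattice L) :
    letI := h.discreteTopology
    IsZLattice ℝ h.toSubmodule :=
  letI := h.discreteTopology
  ⟨h.span_real_eq_top⟩

lemma exists_span_range_eq (h : IsUnimodularLattice L) :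
    ∃ b : Module.Basis (Fin n) ℝ (EuclideanSpace ℝ (Fin n)),
      Submodule.span ℤ (Set.range b) = h.toSubmodule := by
  have := h.discreteTopology
  have := h.isZLattice
  have := ZLattice.module_free ℝ h.toSubmodule
  have := ZLattice.module_finite ℝ h.toSubmodule
  have hrank := ZLattice.rank ℝ h.toSubmodule
  rw [finrank_euclideanSpace_fin] at hrank
  exact ⟨(Module.finBasisOfFinrankEq ℤ h.toSubmodule hrank).ofZLatticeBasis ℝ,
    Module.Basis.ofZLatticeBasis_span ..⟩

lemma dualSubmodule_eq (h : IsUnimodularLattice L) :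
    LinearMap.BilinForm.dualSubmodule (innerₗ _) h.toSubmodule = h.toSubmodule := by
  ext x
  simp only [LinearMap.BilinForm.mem_dualSubmodule, Submodule.mem_one, innerₗ_apply_apply,
    eq_intCast, eq_comm (b := ⟪x, _⟫)]
  exact h.mem_iff.symm

lemma exists_dual_bases (h : IsUnimodularLattice L) :
    ∃ b b' : Module.Basis (Fin n) ℝ (EuclideanSpace ℝ (Fin n)),
      Submodule.span ℤ (Set.range b) = h.toSubmodule ∧
      Submodule.span ℤ (Set.range b') = h.toSubmodule ∧
      ∀ i j, ⟪b' i, b j⟫ = if j = i then 1 else 0 := by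
  obtain ⟨b, hb⟩ := h.exists_span_range_eq
  have hnondeg : (innerₗ (EuclideanSpace ℝ (Fin n))).Nondegenerate :=
    ⟨fun _ hx ↦ inner_self_eq_zero.mp (hx _), fun _ hy ↦ inner_self_eq_zero.mp (hy _)⟩
  refine ⟨b, LinearMap.BilinForm.dualBasis _ hnondeg b, hb, ?_,
    LinearMap.BilinForm.apply_dualBasis_left hnondeg b⟩
  rw [← LinearMap.BilinForm.dualSubmodule_span_of_basis, hb, h.dualSubmodule_eq]

end IsUnimodularLattice

variable {ι : Type*} [Finite ι]

lemma equivFun_symm_intVec_mem_span (b : Module.Basis ι ℝ (EuclideanSpace ℝ (Fin n)))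
    (m : ι → ℤ) : b.equivFun.symm (intVec m) ∈ Submodule.span ℤ (Set.range b) := by
  rw [b.mem_span_iff_repr_mem ℤ]
  exact fun i ↦ ⟨m i, by rw [← b.equivFun_apply, LinearEquiv.apply_symm_apply]; rfl⟩

/-- Integer coordinates on a lattice with respect to a basis of it. -/
def latticeEquiv (b : Module.Basis ι ℝ (EuclideanSpace ℝ (Fin n)))
    (hb : (Submodule.span ℤ (Set.range b) : Set (EuclideanSpace ℝ (Fin n))) = L) :
    (ι → ℤ) ≃ L :=
  Equiv.ofBijective (fun m ↦ ⟨b.equivFun.symm (intVec m), hb ▸ equivFun_symm_intVec_mem_span b m⟩)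
    ⟨fun m m' hm ↦ by
      have hm' := b.equivFun.symm.injective (congrArg Subtype.val hm)
      exact funext fun i ↦ Int.cast_injective (congrFun hm' i),
    fun ⟨x, hx⟩ ↦ by
      rw [← hb] at hx
      choose m hm using (b.mem_span_iff_repr_mem ℤ x).mp hx
      exact ⟨m, Subtype.ext (b.equivFun.symm_apply_eq.mpr (funext hm))⟩⟩

lemma coe_latticeEquiv {b : Module.Basis ι ℝ (EuclideanSpace ℝ (Fin n))}
    {hb : (Submodule.span ℤ (Set.range b) : Set (EuclideanSpace ℝ (Fin n))) = L} (m : ι → ℤ) :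
    (latticeEquiv b hb m : EuclideanSpace ℝ (Fin n)) = b.equivFun.symm (intVec m) := rfl

end UnimodularLattice

section Gaussian

open UpperHalfPlane MatrixGroups MeasureTheory

variable {E : Type*} [NormedAddCommGroup E]

/-- The Gaussian `x ↦ exp (π i τ (x, x))`. -/
def gaussian (τ : ℍ) (x : E) : ℂ := Complex.exp (Real.pi * Complex.I * τ * (‖x‖ : ℂ) ^ 2)

lemma norm_gaussian (τ : ℍ) (x : E) :
    ‖gaussian τ x‖ = Real.exp (-(Real.pi * τ.im * ‖x‖ ^ 2)) := by
  have hexp : Real.pi * Complex.I * τ * (‖x‖ : ℂ) ^ 2 =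
      ((Real.pi * ‖x‖ ^ 2 : ℝ) : ℂ) * (Complex.I * τ) := by
    push_cast
    ring
  rw [gaussian, Complex.norm_exp, hexp, Complex.re_ofReal_mul, Complex.I_mul_re, coe_im]
  ring_nf

lemma norm_gaussian_add_le (τ : ℍ) (x y : E) :
    ‖gaussian τ (x + y)‖ ≤
      Real.exp (Real.pi * τ.im * ‖x‖ ^ 2) * Real.exp (-(Real.pi * τ.im / 2 * ‖y‖ ^ 2)) := by
  have hy : ‖y‖ ≤ ‖x + y‖ + ‖x‖ := by simpa using norm_sub_le (x + y) x
  have hsq : ‖y‖ ^ 2 ≤ 2 * (‖x + y‖ ^ 2 + ‖x‖ ^ 2) :=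
    (pow_le_pow_left₀ (norm_nonneg y) hy 2).trans add_sq_le
  have hτ := mul_le_mul_of_nonneg_left hsq (mul_pos Real.pi_pos τ.im_pos).le
  rw [norm_gaussian, ← Real.exp_add]
  exact Real.exp_le_exp.mpr (by linarith)

lemma continuous_gaussian (τ : ℍ) : Continuous (gaussian τ : E → ℂ) := by
  unfold gaussian
  fun_prop

lemma gaussian_I (x : E) : gaussian I x = ((Real.exp (-(Real.pi * ‖x‖ ^ 2)) : ℝ) : ℂ) := by
  rw [gaussian, coe_I]
  push_cast
  congr 1
  linear_combination Real.pi * (‖x‖ : ℂ) ^ 2 * Complex.I_mul_I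

variable [InnerProductSpace ℝ E] [FiniteDimensional ℝ E] [MeasurableSpace E] [BorelSpace E]

lemma re_neg_pi_mul_I_mul_pos (τ : ℍ) : 0 < (-(Real.pi * Complex.I * τ) : ℂ).re := by
  have hre : (-(Real.pi * Complex.I * τ) : ℂ).re = Real.pi * τ.im := by simp
  exact hre ▸ mul_pos Real.pi_pos τ.im_pos

lemma integrable_gaussian (τ : ℍ) : Integrable (gaussian τ : E → ℂ) := by
  refine (GaussianFourier.integrable_cexp_neg_mul_sq_norm_add (re_neg_pi_mul_I_mul_pos τ) 0
    (0 : E)).congr (Filter.Eventually.of_forall fun v ↦ ?_)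
  simp only [gaussian, neg_neg, zero_mul, add_zero]

lemma integral_exp_inner_mul_gaussian (τ : ℍ) (w : E) :
    ∫ v, Complex.exp (-(2 * Real.pi * Complex.I * (⟪w, v⟫ : ℝ))) * gaussian τ v =
      (Complex.I / τ) ^ (Module.finrank ℝ E / 2 : ℂ) * gaussian (ModularGroup.S • τ) w := by
  have hfourier := GaussianFourier.integral_cexp_neg_mul_sq_norm_add (re_neg_pi_mul_I_mul_pos τ)
    (-(2 * Real.pi * Complex.I)) w
  have hτ := τ.ne_zero
  have hπ : (Real.pi : ℂ) ≠ 0 := by exact_mod_cast Real.pi_ne_zero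
  have hbase : (Real.pi : ℂ) / -(Real.pi * Complex.I * τ) = Complex.I / τ := by
    field_simp
    rw [Complex.I_sq]
  have hexponent : (-(2 * Real.pi * Complex.I)) ^ 2 * (‖w‖ : ℂ) ^ 2 /
      (4 * -(Real.pi * Complex.I * τ)) = Real.pi * Complex.I * (-1 / τ) * (‖w‖ : ℂ) ^ 2 := by
    field_simp
    ring
  rw [hbase, hexponent] at hfourier
  rw [gaussian, coe_S_smul, ← hfourier]
  refine integral_congr_ae (Filter.Eventually.of_forall fun v ↦ ?_)
  beta_reduce
  rw [gaussian, ← Complex.exp_add]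
  ring_nf

end Gaussian

section LatticePoisson

open UpperHalfPlane MatrixGroups MeasureTheory UnitAddTorus

variable {n : ℕ} {L : Set (EuclideanSpace ℝ (Fin n))}

namespace IsUnimodularLattice

lemma summable_exp_neg_mul_norm_sq (h : IsUnimodularLattice L) {t : ℝ} (ht : 0 < t) :
    Summable fun x : L ↦ Real.exp (-(t * ‖(x : EuclideanSpace ℝ (Fin n))‖ ^ 2)) := by
  have := h.discreteTopology
  set k := Module.finrank ℤ h.toSubmodule + 1
  have hinv := (ZLattice.summable_norm_pow_inv h.toSubmodule (2 * k) (by lia)).mul_left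
    (k.factorial / t ^ k)
  refine Summable.of_norm_bounded_eventually (ι := h.toSubmodule) hinv ?_
  filter_upwards [(Set.finite_singleton (0 : h.toSubmodule)).compl_mem_cofinite] with x hx
  have hx₀ : 0 < ‖x‖ := norm_pos_iff.mpr hx
  have hexp := Real.pow_div_factorial_le_exp (t * ‖x‖ ^ 2) (by positivity) k
  have hrw : k.factorial / t ^ k * ‖x‖⁻¹ ^ (2 * k) = ((t * ‖x‖ ^ 2) ^ k / k.factorial)⁻¹ := by
    rw [inv_div, mul_pow, ← pow_mul, inv_pow]
    field_simp
  rw [Real.norm_of_nonneg (Real.exp_nonneg _), Real.exp_neg, hrw]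
  exact inv_anti₀ (by positivity) hexp

lemma summable_gaussian_add (h : IsUnimodularLattice L) (τ : ℍ)
    (w : EuclideanSpace ℝ (Fin n)) :
    Summable fun x : L ↦ gaussian τ ((x : EuclideanSpace ℝ (Fin n)) + w) := by
  have hs := h.summable_exp_neg_mul_norm_sq (half_pos (mul_pos Real.pi_pos τ.im_pos))
  refine Summable.of_norm_bounded (hs.mul_left (Real.exp (Real.pi * τ.im * ‖w‖ ^ 2))) fun x ↦ ?_
  rw [add_comm]
  exact norm_gaussian_add_le τ w x

lemma tsum_gaussian_I_add_ne_zero (h : IsUnimodularLattice L) (w : EuclideanSpace ℝ (Fin n)) :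
    ∑' x : L, gaussian I ((x : EuclideanSpace ℝ (Fin n)) + w) ≠ 0 := by
  have hs := h.summable_gaussian_add I w
  simp only [gaussian_I] at hs ⊢
  rw [← Complex.ofReal_tsum, Complex.ofReal_ne_zero]
  exact ((Complex.summable_ofReal.mp hs).tsum_pos (fun _ ↦ (Real.exp_pos _).le)
    ⟨0, h.toSubmodule.zero_mem⟩ (Real.exp_pos _)).ne'

end IsUnimodularLattice

lemma exists_map_equivFun_symm_volume (b : Module.Basis (Fin n) ℝ (EuclideanSpace ℝ (Fin n))) :
    ∃ c : NNReal, volume.map b.equivFun.symm = c • volume := by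
  let φ : (Fin n → ℝ) ≃L[ℝ] EuclideanSpace ℝ (Fin n) := b.equivFun.symm.toContinuousLinearEquiv
  have : (volume.map φ).IsAddHaarMeasure := φ.isAddHaarMeasure_map volume
  exact ⟨_, Measure.isAddLeftInvariant_eq_smul (volume.map φ) volume⟩

lemma measurableEmbedding_equivFun_symm
    (b : Module.Basis (Fin n) ℝ (EuclideanSpace ℝ (Fin n))) :
    MeasurableEmbedding b.equivFun.symm :=
  b.equivFun.symm.toContinuousLinearEquiv.toHomeomorph.measurableEmbedding

lemma continuous_equivFun_symm (b : Module.Basis (Fin n) ℝ (EuclideanSpace ℝ (Fin n))) :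
    Continuous b.equivFun.symm :=
  b.equivFun.symm.toContinuousLinearEquiv.continuous

lemma hasDominatedTranslates_gaussian (h : IsUnimodularLattice L) (τ : ℍ)
    {b : Module.Basis (Fin n) ℝ (EuclideanSpace ℝ (Fin n))}
    (hb : (Submodule.span ℤ (Set.range b) : Set (EuclideanSpace ℝ (Fin n))) = L) :
    HasDominatedTranslates fun x ↦ gaussian τ (b.equivFun.symm x) := fun K hK ↦ by
  obtain ⟨M, hM⟩ := (hK.image ((continuous_equivFun_symm b).norm.pow 2)).bddAbove
  have hs := (latticeEquiv b hb).summable_iff.mpr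
    (h.summable_exp_neg_mul_norm_sq (half_pos (mul_pos Real.pi_pos τ.im_pos)))
  refine ⟨_, hs.mul_left (Real.exp (Real.pi * τ.im * M)), fun x hx m ↦ ?_⟩
  beta_reduce
  rw [map_add]
  refine (norm_gaussian_add_le τ _ _).trans (mul_le_mul_of_nonneg_right (Real.exp_le_exp.mpr ?_)
    (Real.exp_nonneg _))
  exact mul_le_mul_of_nonneg_left (hM (Set.mem_image_of_mem _ hx))
    (mul_pos Real.pi_pos τ.im_pos).le

lemma inner_equivFun_symm {b b' : Module.Basis (Fin n) ℝ (EuclideanSpace ℝ (Fin n))}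
    (hbb' : ∀ i j, ⟪b' i, b j⟫ = if j = i then 1 else 0) (x y : Fin n → ℝ) :
    ⟪b'.equivFun.symm x, b.equivFun.symm y⟫ = ∑ i, x i * y i := by
  simp only [Module.Basis.equivFun_symm_apply, sum_inner, inner_sum, real_inner_smul_left,
    real_inner_smul_right, hbb', mul_ite, mul_one, mul_zero, Finset.sum_ite_eq,
    Finset.mem_univ, if_true, mul_comm]

lemma integral_mFourier_mul_gaussian {b b' : Module.Basis (Fin n) ℝ (EuclideanSpace ℝ (Fin n))}
    (hbb' : ∀ i j, ⟪b' i, b j⟫ = if j = i then 1 else 0) {c : NNReal}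
    (hc : volume.map b.equivFun.symm = c • volume) (τ : ℍ) (k : Fin n → ℤ) :
    ∫ x, mFourier (-k) (toTorus x) * gaussian τ (b.equivFun.symm x) =
      c * ((Complex.I / τ) ^ (n / 2 : ℂ) *
        gaussian (ModularGroup.S • τ) (b'.equivFun.symm (intVec k))) := by
  have hmap := (measurableEmbedding_equivFun_symm b).integral_map (μ := volume) fun v ↦
    Complex.exp (-(2 * Real.pi * Complex.I * (⟪b'.equivFun.symm (intVec k), v⟫ : ℝ))) *
      gaussian τ v
  rw [hc, integral_smul_nnreal_measure, integral_exp_inner_mul_gaussian,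
    finrank_euclideanSpace_fin] at hmap
  refine Eq.trans ?_ hmap.symm
  refine integral_congr_ae (Filter.Eventually.of_forall fun x ↦ ?_)
  simp only [mFourier_toTorus, inner_equivFun_symm hbb', Pi.neg_apply, intVec_apply]
  push_cast
  simp only [neg_mul, Finset.sum_neg_distrib, mul_neg]

lemma IsUnimodularLattice.exists_tsum_gaussian_add (h : IsUnimodularLattice L) :
    ∃ c : NNReal, ∀ (τ : ℍ) (w : EuclideanSpace ℝ (Fin n)),
      ∑' x : L, gaussian τ ((x : EuclideanSpace ℝ (Fin n)) + w) =
        c * ((Complex.I / τ) ^ (n / 2 : ℂ) *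
          ∑' y : L, gaussian (ModularGroup.S • τ) (y : EuclideanSpace ℝ (Fin n)) *
            Complex.exp (2 * Real.pi * Complex.I * (⟪(y : EuclideanSpace ℝ (Fin n)), w⟫ : ℝ))) := by
  obtain ⟨b, b', hb, hb', hbb'⟩ := h.exists_dual_bases
  replace hb : _ = L := congrArg SetLike.coe hb
  replace hb' : _ = L := congrArg SetLike.coe hb'
  obtain ⟨c, hc⟩ := exists_map_equivFun_symm_volume b
  refine ⟨c, fun τ w ↦ ?_⟩
  obtain ⟨x, rfl⟩ := b.equivFun.symm.surjective w
  have hmap : Integrable (gaussian τ) (volume.map b.equivFun.symm) :=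
    hc ▸ (integrable_gaussian τ).smul_measure_nnreal
  have hint := (measurableEmbedding_equivFun_symm b).integrable_map_iff.mp hmap
  have hsummable : Summable fun k : Fin n → ℤ ↦
      ∫ x, mFourier (-k) (toTorus x) * gaussian τ (b.equivFun.symm x) := by
    simp only [integral_mFourier_mul_gaussian hbb' hc]
    have hs := h.summable_gaussian_add (ModularGroup.S • τ) 0
    simp only [add_zero] at hs
    exact (((latticeEquiv b' hb').summable_iff.mpr hs).mul_left _).mul_left _
  have hsum := (hasDominatedTranslates_gaussian h τ hb).hasSum_integral_mul_mFourier
    ((continuous_gaussian τ).comp (continuous_equivFun_symm b)) hint hsummable x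
  beta_reduce at hsum
  simp only [integral_mFourier_mul_gaussian hbb' hc, map_add] at hsum
  rw [← (latticeEquiv b hb).tsum_eq, ← (latticeEquiv b' hb').tsum_eq, ← tsum_mul_left,
    ← tsum_mul_left]
  refine Eq.trans (tsum_congr fun m ↦ congrArg (gaussian τ) (add_comm _ _)) ?_
  refine hsum.tsum_eq.symm.trans (tsum_congr fun k ↦ ?_)
  rw [mFourier_toTorus, coe_latticeEquiv, inner_equivFun_symm hbb']
  push_cast [intVec_apply]
  ring

theorem IsUnimodularLattice.tsum_gaussian_add (h : IsUnimodularLattice L) (τ : ℍ)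
    (w : EuclideanSpace ℝ (Fin n)) :
    ∑' x : L, gaussian τ ((x : EuclideanSpace ℝ (Fin n)) + w) =
      (Complex.I / τ) ^ (n / 2 : ℂ) *
        ∑' y : L, gaussian (ModularGroup.S • τ) (y : EuclideanSpace ℝ (Fin n)) *
          Complex.exp (2 * Real.pi * Complex.I * (⟪(y : EuclideanSpace ℝ (Fin n)), w⟫ : ℝ)) := by
  obtain ⟨c, hc⟩ := h.exists_tsum_gaussian_add
  have hSI : ModularGroup.S • I = I := by
    ext
    rw [coe_S_smul, coe_I, div_eq_iff Complex.I_ne_zero, Complex.I_mul_I]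
  have hI := hc I 0
  have hne := h.tsum_gaussian_I_add_ne_zero 0
  simp only [hSI, coe_I, div_self Complex.I_ne_zero, Complex.one_cpow, one_mul, add_zero,
    inner_zero_right, Complex.ofReal_zero, mul_zero, Complex.exp_zero, mul_one] at hI hne
  rw [hc, mul_right_cancel₀ hne (hI.symm.trans (one_mul _).symm), one_mul]

end LatticePoisson

section Shadow

variable {n : ℕ} {L : Set (EuclideanSpace ℝ (Fin n))} {w x y z : EuclideanSpace ℝ (Fin n)}

lemma mem_evenSublattice_or_odd (h : IsUnimodularLattice L) (hx : x ∈ L) :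
    x ∈ evenSublattice L ∨ ∃ m : ℤ, Odd m ∧ normOf x = m := by
  obtain ⟨m, hm⟩ := h.mem_iff.mp hx x hx
  rcases Int.even_or_odd' m with ⟨k, rfl | rfl⟩
  · exact Or.inl ⟨hx, k, hm.trans (by push_cast; ring)⟩
  · exact Or.inr ⟨_, odd_two_mul_add_one k, hm⟩

lemma mem_of_mem_dualSet_evenSublattice (h : IsUnimodularLattice L)
    (hy : y ∈ dualSet (evenSublattice L)) (hz : z ∈ L) (hodd : ∃ m : ℤ, Odd m ∧ normOf z = m)
    (hyz : ∃ k : ℤ, ⟪y, z⟫ = k) : y ∈ L := by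
  refine h.mem_iff.mpr fun x hx ↦ ?_
  rcases mem_evenSublattice_or_odd h hx with hx' | ⟨a, ha, hxa⟩
  · exact hy x hx'
  obtain ⟨m, hm, hzm⟩ := hodd
  obtain ⟨k, hk⟩ := hyz
  obtain ⟨q, hq⟩ := h.mem_iff.mp hz x hx
  obtain ⟨r, hr⟩ := ha.add_odd hm
  have heven : normOf (x - z) = 2 * ((r - q : ℤ) : ℝ) := by
    have hr' : (a : ℝ) + m = r + r := by exact_mod_cast hr
    rw [normOf] at hxa hzm ⊢
    rw [inner_sub_sub_self, real_inner_comm z x, hxa, hzm, hq]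
    push_cast
    linarith
  obtain ⟨l, hl⟩ := hy (x - z) ⟨h.toSubmodule.sub_mem hx hz, _, heven⟩
  refine ⟨l + k, ?_⟩
  rw [inner_sub_right, hk] at hl
  push_cast
  linarith

/-- Half of a characteristic vector of `L`: a vector `w` with `2 (x, w) ≡ (x, x)` modulo `2` for
all `x` in `L`. -/
def IsHalfCharacteristic (L : Set (EuclideanSpace ℝ (Fin n)))
    (w : EuclideanSpace ℝ (Fin n)) : Prop :=
  ∀ x ∈ L, ∃ k : ℤ, 2 * ⟪x, w⟫ = normOf x + 2 * k

lemma IsUnimodularLattice.exists_isHalfCharacteristic (h : IsUnimodularLattice L) :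
    ∃ w, IsHalfCharacteristic L w := by
  obtain ⟨b, b', hb, -, hbb'⟩ := h.exists_dual_bases
  let w := (1 / 2 : ℝ) • ∑ i, normOf (b i) • b' i
  have hbasis (i : Fin n) : 2 * ⟪b i, w⟫ = normOf (b i) := by
    simp only [w, real_inner_comm _ (b i), real_inner_smul_left, sum_inner, hbb', mul_ite, mul_one,
      mul_zero, Finset.sum_ite_eq, Finset.mem_univ, if_true]
    ring
  clear_value w
  refine ⟨w, fun x hx ↦ ?_⟩
  replace hx : x ∈ Submodule.span ℤ (Set.range b) := hb ▸ hx
  induction hx using Submodule.span_induction with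
  | mem x hx =>
    obtain ⟨i, rfl⟩ := hx
    exact ⟨0, by rw [hbasis, Int.cast_zero, mul_zero, add_zero]⟩
  | zero => exact ⟨0, by simp only [normOf, inner_zero_left, Int.cast_zero, mul_zero, add_zero]⟩
  | add x y hx hy ihx ihy =>
    rw [hb] at hx hy
    obtain ⟨k, hk⟩ := ihx
    obtain ⟨l, hl⟩ := ihy
    obtain ⟨m, hm⟩ := h.mem_iff.mp hx y hy
    refine ⟨k + l - m, ?_⟩
    rw [normOf] at hk hl ⊢
    rw [inner_add_add_self, real_inner_comm x y, inner_add_left, mul_add, hk, hl, hm]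
    push_cast
    ring
  | smul a x hx ihx =>
    rw [hb] at hx
    obtain ⟨k, hk⟩ := ihx
    obtain ⟨m, hm⟩ := h.mem_iff.mp hx x hx
    obtain ⟨r, hr⟩ := Int.even_mul_pred_self a
    have hr' : (a : ℝ) * (a - 1) = r + r := by exact_mod_cast hr
    refine ⟨a * k - r * m, ?_⟩
    rw [normOf] at hk ⊢
    rw [← Int.cast_smul_eq_zsmul ℝ, real_inner_smul_left, real_inner_smul_left,
      real_inner_smul_right, hm]
    rw [hm] at hk
    push_cast
    linear_combination (a : ℝ) * hk - (m : ℝ) * hr'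

namespace IsHalfCharacteristic

lemma add_mem (hw : IsHalfCharacteristic L w) (h : IsUnimodularLattice L) (hx : x ∈ L) :
    IsHalfCharacteristic L (x + w) := fun z hz ↦ by
  obtain ⟨k, hk⟩ := hw z hz
  obtain ⟨m, hm⟩ := h.mem_iff.mp hz x hx
  exact ⟨m + k, by rw [inner_add_right, mul_add, hk, hm]; push_cast; ring⟩

lemma mem_dualSet_evenSublattice (hw : IsHalfCharacteristic L w) :
    w ∈ dualSet (evenSublattice L) := by
  rintro z ⟨hz, m, hm⟩
  obtain ⟨k, hk⟩ := hw z hz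
  exact ⟨m + k, by rw [real_inner_comm]; push_cast; linarith⟩

lemma notMem (hw : IsHalfCharacteristic L w) (h : IsUnimodularLattice L) (ho : IsOddLattice L) :
    w ∉ L := fun hwL ↦ by
  obtain ⟨z, hz, m, ⟨r, rfl⟩, hm⟩ := ho
  obtain ⟨k, hk⟩ := hw z hz
  obtain ⟨l, hl⟩ := h.mem_iff.mp hz w hwL
  rw [hl, hm] at hk
  have hparity : 2 * l = 2 * r + 1 + 2 * k := by exact_mod_cast hk
  lia

lemma mem_shadow (hw : IsHalfCharacteristic L w) (h : IsUnimodularLattice L)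
    (ho : IsOddLattice L) : w ∈ shadow L :=
  ⟨hw.mem_dualSet_evenSublattice, hw.notMem h ho⟩

lemma sub_mem_of_mem_shadow (hw : IsHalfCharacteristic L w) (h : IsUnimodularLattice L)
    (ho : IsOddLattice L) (hy : y ∈ shadow L) : y - w ∈ L := by
  obtain ⟨z, hz, hzodd⟩ := ho
  have hyz : ¬ ∃ k : ℤ, ⟪y, z⟫ = k := fun hyz ↦
    hy.2 (mem_of_mem_dualSet_evenSublattice h hy.1 hz hzodd hyz)
  refine mem_of_mem_dualSet_evenSublattice h (fun v hv ↦ ?_) hz hzodd ?_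
  · obtain ⟨k, hk⟩ := hy.1 v hv
    obtain ⟨l, hl⟩ := hw.mem_dualSet_evenSublattice v hv
    exact ⟨k - l, by rw [inner_sub_left, hk, hl, Int.cast_sub]⟩
  obtain ⟨m, ⟨r, rfl⟩, hm⟩ := hzodd
  obtain ⟨k, hk⟩ := hw z hz
  have heven : normOf ((2 : ℝ) • z) = 2 * ((2 * (2 * r + 1) : ℤ) : ℝ) := by
    rw [normOf] at hm ⊢
    rw [real_inner_smul_left, real_inner_smul_right, hm]
    push_cast
    ring
  have hz₂ : (2 : ℝ) • z ∈ L := by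
    rw [two_smul]
    exact h.toSubmodule.add_mem hz hz
  obtain ⟨l, hl⟩ := hy.1 _ ⟨hz₂, _, heven⟩
  rw [inner_smul_right] at hl
  rcases Int.even_or_odd' l with ⟨c, rfl | rfl⟩ <;> push_cast at hl
  · exact absurd ⟨c, by linarith⟩ hyz
  · refine ⟨c - r - k, ?_⟩
    rw [inner_sub_left, real_inner_comm z w]
    push_cast at hm ⊢
    linarith

lemma mem_shadow_iff (hw : IsHalfCharacteristic L w) (h : IsUnimodularLattice L)
    (ho : IsOddLattice L) : y ∈ shadow L ↔ y - w ∈ L := by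
  refine ⟨hw.sub_mem_of_mem_shadow h ho, fun hy ↦ ?_⟩
  simpa only [sub_add_cancel] using (hw.add_mem h hy).mem_shadow h ho

end IsHalfCharacteristic

end Shadow

section ThetaSeries

open UpperHalfPlane MatrixGroups
open scoped PowerSeries

variable {n m : ℕ} {S L : Set (EuclideanSpace ℝ (Fin n))} {w y : EuclideanSpace ℝ (Fin n)}

lemma gaussian_eq_nome_pow {k : ℕ} (hy : normOf y = k) (τ : ℍ) : gaussian τ y = nome τ ^ k := by
  rw [normOf_eq_norm_sq] at hy
  rw [gaussian, nome_eq_exp, ← Complex.exp_nat_mul, mul_comm (k : ℂ)]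
  congr 2
  exact_mod_cast hy

lemma gaussian_T_smul (τ : ℍ) (y : EuclideanSpace ℝ (Fin n)) :
    gaussian (ModularGroup.T • τ) y =
      Complex.exp (Real.pi * Complex.I * (normOf y : ℝ)) * gaussian τ y := by
  rw [gaussian, gaussian, normOf_eq_norm_sq, ← Complex.exp_add, coe_T_smul]
  congr 1
  push_cast
  ring

/-- The theta series of a set `S` of vectors, as a function on the upper half plane. -/
def thetaSeries (S : Set (EuclideanSpace ℝ (Fin n))) (τ : ℍ) : ℂ :=
  ∑' x : S, gaussian τ (x : EuclideanSpace ℝ (Fin n))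

/-- The theta series of a set `S` of vectors of integral norm, as a formal power series in the
nome. -/
def thetaPowerSeries (S : Set (EuclideanSpace ℝ (Fin n))) : ℂ⟦X⟧ :=
  PowerSeries.mk fun k ↦ (numVecsOfNorm S k : ℂ)

lemma coeff_thetaPowerSeries (k : ℕ) :
    (thetaPowerSeries S).coeff k = (numVecsOfNorm S k : ℂ) :=
  PowerSeries.coeff_mk k _

lemma finite_setOf_normOf_eq {τ : ℍ}
    (hs : Summable fun x : S ↦ gaussian τ (x : EuclideanSpace ℝ (Fin n))) (k : ℕ) :
    Finite {x : S // normOf (x : EuclideanSpace ℝ (Fin n)) = k} := by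
  have hconst := (hs.subtype {x : S | normOf (x : EuclideanSpace ℝ (Fin n)) = k}).norm.congr
    fun x ↦ by rw [Function.comp_apply, gaussian_eq_nome_pow x.2 τ]
  exact .of_summable_const (norm_pos_iff.mpr (pow_ne_zero k (nome_ne_zero τ))) hconst

lemma card_subtype_normOf_eq (k : ℕ) :
    Nat.card {x : S // normOf (x : EuclideanSpace ℝ (Fin n)) = k} = numVecsOfNorm S k :=
  Nat.card_congr (Equiv.subtypeSubtypeEquivSubtypeInter (· ∈ S) fun x ↦ normOf x = k)

lemma hasNomeExpansion_thetaSeries (hS : ∀ x ∈ S, ∃ k : ℕ, normOf x = k)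
    (hs : ∀ τ, Summable fun x : S ↦ gaussian τ (x : EuclideanSpace ℝ (Fin n))) :
    HasNomeExpansion (thetaSeries S) (thetaPowerSeries S) := fun τ ↦ by
  choose N hN using fun x : S ↦ hS x x.2
  refine ((Equiv.sigmaFiberEquiv N).hasSum_iff.mpr (hs τ).hasSum).sigma fun k ↦ ?_
  have e : {x // N x = k} ≃ {x : S // normOf (x : EuclideanSpace ℝ (Fin n)) = k} :=
    Equiv.subtypeEquivRight fun x ↦ by rw [hN, Nat.cast_inj]
  have := finite_setOf_normOf_eq (hs τ) k
  have := Finite.of_equiv _ e.symm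
  have := Fintype.ofFinite {x // N x = k}
  have hterm (x : {x // N x = k}) :
      gaussian τ (x : EuclideanSpace ℝ (Fin n)) = nome τ ^ k := by
    rw [gaussian_eq_nome_pow (hN x) τ, x.2]
  have hsum : ∑ x : {x // N x = k}, gaussian τ (x : EuclideanSpace ℝ (Fin n)) =
      (thetaPowerSeries S).coeff k • nome τ ^ k := by
    rw [coeff_thetaPowerSeries, ← card_subtype_normOf_eq, ← Nat.card_congr e,
      Nat.card_eq_fintype_card, Fintype.sum_congr _ _ hterm, Finset.sum_const, Finset.card_univ,
      nsmul_eq_mul, smul_eq_mul]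
  exact hsum ▸ hasSum_fintype _

lemma IsUnimodularLattice.hasNomeExpansion_thetaSeries (h : IsUnimodularLattice L) :
    HasNomeExpansion (thetaSeries L) (thetaPowerSeries L) :=
  _root_.hasNomeExpansion_thetaSeries (fun _ hx ↦ h.exists_normOf_eq_natCast hx) fun τ ↦ by
    simpa only [add_zero] using h.summable_gaussian_add τ 0

lemma IsUnimodularLattice.tsum_gaussian_S_smul (h : IsUnimodularLattice L) (hn : n = 4 * m)
    (τ : ℍ) (w : EuclideanSpace ℝ (Fin n)) :
    ∑' x : L, gaussian (ModularGroup.S • τ) (x : EuclideanSpace ℝ (Fin n)) *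
        Complex.exp (2 * Real.pi * Complex.I * (⟪(x : EuclideanSpace ℝ (Fin n)), w⟫ : ℝ)) =
      (-1) ^ m * (τ : ℂ) ^ (2 * m) *
        ∑' x : L, gaussian τ ((x : EuclideanSpace ℝ (Fin n)) + w) := by
  have hτ := τ.ne_zero
  have hexponent : ((n : ℂ) / 2) = ((2 * m : ℕ) : ℂ) := by
    rw [hn]
    push_cast
    ring
  have hfactor : (-1) ^ m * (τ : ℂ) ^ (2 * m) * (Complex.I / τ) ^ (2 * m) = 1 := by
    rw [mul_assoc, ← mul_pow, mul_div_cancel₀ _ hτ, pow_mul, Complex.I_sq, ← mul_pow,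
      neg_one_mul, neg_neg, one_pow]
  rw [h.tsum_gaussian_add, hexponent, Complex.cpow_natCast, ← mul_assoc, hfactor, one_mul]

namespace IsHalfCharacteristic

lemma exp_inner (hw : IsHalfCharacteristic L w) (hy : y ∈ L) :
    Complex.exp (2 * Real.pi * Complex.I * (⟪y, w⟫ : ℝ)) =
      Complex.exp (Real.pi * Complex.I * (normOf y : ℝ)) := by
  obtain ⟨k, hk⟩ := hw y hy
  have hk' : 2 * ((⟪y, w⟫ : ℝ) : ℂ) = (normOf y : ℝ) + 2 * k := by exact_mod_cast hk
  refine Complex.exp_eq_exp_iff_exists_int.mpr ⟨k, ?_⟩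
  linear_combination (Real.pi * Complex.I) * hk'

lemma exp_normOf_add (hw : IsHalfCharacteristic L w) (h : IsUnimodularLattice L) (hy : y ∈ L) :
    Complex.exp (Real.pi * Complex.I * (normOf (y + w) : ℝ)) =
      Complex.exp (Real.pi * Complex.I * (normOf w : ℝ)) := by
  obtain ⟨k, hk⟩ := hw y hy
  obtain ⟨l, hl⟩ := h.mem_iff.mp hy y hy
  have hadd : normOf (y + w) = normOf w + 2 * (l + k : ℤ) := by
    rw [normOf] at hk ⊢
    rw [real_inner_add_add_self, hk, hl, normOf]
    push_cast
    ring
  refine Complex.exp_eq_exp_iff_exists_int.mpr ⟨l + k, ?_⟩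
  rw [hadd]
  push_cast
  ring

theorem isThetaPair (hw : IsHalfCharacteristic L w) (h : IsUnimodularLattice L)
    (hn : n = 4 * m) :
    IsThetaPair ((-1) ^ m) (2 * m) (thetaSeries L)
      fun τ ↦ ∑' x : L, gaussian τ ((x : EuclideanSpace ℝ (Fin n)) + w) where
  map_T_smul_T_smul := h.hasNomeExpansion_thetaSeries.T_smul_T_smul
  map_S_smul τ := by
    simpa only [thetaSeries, inner_zero_right, Complex.ofReal_zero, mul_zero, Complex.exp_zero,
      mul_one, add_zero] using h.tsum_gaussian_S_smul hn τ 0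
  map_T_smul_S_smul τ := by
    rw [← h.tsum_gaussian_S_smul hn τ w, thetaSeries]
    exact tsum_congr fun x ↦ by rw [gaussian_T_smul, hw.exp_inner x.2, mul_comm]

theorem exists_normOf_eq (hw : IsHalfCharacteristic L w) (h : IsUnimodularLattice L)
    (hn : n = 4 * m) : ∃ N : ℕ, normOf w = N ∧ N ≡ m [MOD 2] := by
  have hT := (hw.isThetaPair h hn).apply_T_smul
    (by rw [← pow_mul, pow_mul', neg_one_sq, one_pow]) I
  simp only [gaussian_T_smul, hw.exp_normOf_add h (Subtype.prop _), tsum_mul_left] at hT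
  have hexp := mul_right_cancel₀ (h.tsum_gaussian_I_add_ne_zero w) hT
  rw [← Complex.exp_pi_mul_I, ← Complex.exp_nat_mul, Complex.exp_eq_exp_iff_exists_int] at hexp
  obtain ⟨a, ha⟩ := hexp
  have hnorm : normOf w = (m + 2 * a : ℤ) := by
    have hpi : (Real.pi * Complex.I : ℂ) ≠ 0 := by simp
    have : ((normOf w : ℝ) : ℂ) = m + 2 * a := mul_left_cancel₀ hpi (by linear_combination ha)
    exact_mod_cast this
  have hnonneg : (0 : ℝ) ≤ (m + 2 * a : ℤ) := hnorm ▸ real_inner_self_nonneg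
  obtain ⟨N, hN⟩ := Int.eq_ofNat_of_zero_le (Int.cast_nonneg_iff.mp hnonneg)
  refine ⟨N, by rw [hnorm, hN, Int.cast_natCast], ?_⟩
  rw [Nat.ModEq]
  lia

lemma hasSum_gaussian_shadow (hw : IsHalfCharacteristic L w) (h : IsUnimodularLattice L)
    (ho : IsOddLattice L) (τ : ℍ) :
    HasSum (fun y : shadow L ↦ gaussian τ (y : EuclideanSpace ℝ (Fin n)))
      (∑' x : L, gaussian τ ((x : EuclideanSpace ℝ (Fin n)) + w)) := by
  let e : L ≃ shadow L := (Equiv.addRight w).subtypeEquiv fun x ↦ by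
    simp only [Equiv.coe_addRight, hw.mem_shadow_iff h ho, add_sub_cancel_right]
  exact e.hasSum_iff.mp (h.summable_gaussian_add τ w).hasSum

end IsHalfCharacteristic

namespace IsUnimodularLattice

lemma exists_normOf_eq_of_mem_shadow (h : IsUnimodularLattice L) (ho : IsOddLattice L)
    (hn : n = 4 * m) (hy : y ∈ shadow L) : ∃ N : ℕ, normOf y = N ∧ N ≡ m [MOD 2] := by
  obtain ⟨w, hw⟩ := h.exists_isHalfCharacteristic
  have hy' := hw.add_mem h ((hw.mem_shadow_iff h ho).mp hy)
  rw [sub_add_cancel] at hy'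
  exact hy'.exists_normOf_eq h hn

theorem isThetaPair_shadow (h : IsUnimodularLattice L) (ho : IsOddLattice L) (hn : n = 4 * m) :
    IsThetaPair ((-1) ^ m) (2 * m) (thetaSeries L) (thetaSeries (shadow L)) := by
  obtain ⟨w, hw⟩ := h.exists_isHalfCharacteristic
  convert hw.isThetaPair h hn using 1
  exact funext fun τ ↦ (hw.hasSum_gaussian_shadow h ho τ).tsum_eq

theorem hasNomeExpansion_thetaSeries_shadow (h : IsUnimodularLattice L) (ho : IsOddLattice L)
    (hn : n = 4 * m) :
    HasNomeExpansion (thetaSeries (shadow L)) (thetaPowerSeries (shadow L)) := by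
  obtain ⟨w, hw⟩ := h.exists_isHalfCharacteristic
  refine _root_.hasNomeExpansion_thetaSeries (fun y hy ↦ ?_)
    fun τ ↦ (hw.hasSum_gaussian_shadow h ho τ).summable
  obtain ⟨N, hN, -⟩ := h.exists_normOf_eq_of_mem_shadow ho hn hy
  exact ⟨N, hN⟩

end IsUnimodularLattice

end ThetaSeries

section InitialCoeffs

open scoped PowerSeries

/-- The coefficients of `p` in degrees less than `n` are the integers `v`. -/
def HasInitialCoeffs {n : ℕ} (p : ℂ⟦X⟧) (v : Fin n → ℤ) : Prop :=
  ∀ i : Fin n, p.coeff i = v i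

namespace HasInitialCoeffs

variable {n : ℕ} {p r : ℂ⟦X⟧} {u v w : Fin n → ℤ}

lemma coeff_eq (hp : HasInitialCoeffs p v) {i : ℕ} (hi : i < n) : p.coeff i = v ⟨i, hi⟩ :=
  hp ⟨i, hi⟩

lemma add (hp : HasInitialCoeffs p v) (hr : HasInitialCoeffs r w) (hu : v + w = u) :
    HasInitialCoeffs (p + r) u := fun i ↦ by
  rw [map_add, hp i, hr i, ← hu, Pi.add_apply, Int.cast_add]

lemma neg (hp : HasInitialCoeffs p v) (hu : -v = u) : HasInitialCoeffs (-p) u := fun i ↦ by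
  rw [map_neg, hp i, ← hu, Pi.neg_apply, Int.cast_neg]

lemma sub (hp : HasInitialCoeffs p v) (hr : HasInitialCoeffs r w) (hu : v - w = u) :
    HasInitialCoeffs (p - r) u := fun i ↦ by
  rw [map_sub, hp i, hr i, ← hu, Pi.sub_apply, Int.cast_sub]

lemma rescale_neg_one (hp : HasInitialCoeffs p v) (hu : ∀ i : Fin n, (-1) ^ (i : ℕ) * v i = u i) :
    HasInitialCoeffs (PowerSeries.rescale (-1) p) u := fun i ↦ by
  rw [PowerSeries.coeff_rescale, hp i, ← hu]
  push_cast
  rfl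

lemma mul (hp : HasInitialCoeffs p v) (hr : HasInitialCoeffs r w)
    (hu : ∀ i, ∑ j ∈ Finset.Iic i, v j * w (i - j) = u i) : HasInitialCoeffs (p * r) u := by
  intro i
  rw [PowerSeries.coeff_mul, ← hu, Finset.Nat.sum_antidiagonal_eq_sum_range_succ_mk,
    Nat.range_succ_eq_Iic, ← Fin.map_valEmbedding_Iic, Finset.sum_map, Int.cast_sum]
  refine Finset.sum_congr rfl fun j hj ↦ ?_
  rw [Fin.valEmbedding_apply, ← Fin.sub_val_of_le (Finset.mem_Iic.mp hj), hp, hr, Int.cast_mul]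

end HasInitialCoeffs

end InitialCoeffs

section IntegerLattice

open Finset

variable {n k : ℕ}

/-- The lattice `ℤⁿ`. -/
def integerLattice (n : ℕ) : Set (EuclideanSpace ℝ (Fin n)) :=
  Set.range fun z : Fin n → ℤ ↦ WithLp.toLp 2 (intVec z)

/-- The vector `(1/2, …, 1/2)`, whose translate of `ℤⁿ` is the shadow of `ℤⁿ`. -/
def halfVector (n : ℕ) : EuclideanSpace ℝ (Fin n) := WithLp.toLp 2 fun _ ↦ 1 / 2

lemma normOf_eq_sum_sq (x : EuclideanSpace ℝ (Fin n)) : normOf x = ∑ i, x i ^ 2 := by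
  rw [normOf_eq_norm_sq, EuclideanSpace.real_norm_sq_eq]

lemma isUnimodularLattice_integerLattice : IsUnimodularLattice (integerLattice n) := by
  refine Set.Subset.antisymm ?_ fun x hx ↦ ?_
  · rintro - ⟨z, rfl⟩ - ⟨z', rfl⟩
    exact ⟨∑ i, z' i * z i, by
      simp only [PiLp.inner_apply, intVec_apply, RCLike.inner_apply, conj_trivial, Int.cast_sum,
        Int.cast_mul]⟩
  · have hcoord (i : Fin n) : ∃ m : ℤ, x i = m := by
      obtain ⟨m, hm⟩ := hx (EuclideanSpace.single i 1) ⟨Pi.single i 1, by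
        ext j
        simp [Pi.single_apply]⟩
      rw [EuclideanSpace.inner_single_right, one_mul, conj_trivial] at hm
      exact ⟨m, hm⟩
    choose z hz using hcoord
    exact ⟨z, by ext i; exact (hz i).symm⟩

lemma isOddLattice_integerLattice : IsOddLattice (integerLattice (n + 1)) :=
  ⟨_, ⟨Pi.single 0 1, rfl⟩, 1, odd_one, by
    simp [normOf_eq_sum_sq, Pi.single_apply]⟩

lemma isHalfCharacteristic_halfVector :
    IsHalfCharacteristic (integerLattice n) (halfVector n) := by
  rintro - ⟨z, rfl⟩
  choose r hr using fun i ↦ Int.even_mul_pred_self (z i)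
  refine ⟨-∑ i, r i, ?_⟩
  have hr' (i : Fin n) : (z i : ℝ) * (z i - 1) = r i + r i := by exact_mod_cast hr i
  rw [normOf_eq_sum_sq]
  simp only [PiLp.inner_apply, halfVector, intVec_apply, RCLike.inner_apply, conj_trivial]
  push_cast
  rw [mul_neg, ← sub_eq_add_neg, mul_sum, mul_sum, ← sum_sub_distrib]
  exact sum_congr rfl fun i _ ↦ by linear_combination -hr' i

lemma numVecsOfNorm_range {φ : (Fin n → ℤ) → EuclideanSpace ℝ (Fin n)}
    (hφ : Function.Injective φ) {P : (Fin n → ℤ) → Prop} [DecidablePred P] {a b : ℤ} {s : ℝ}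
    (hP : ∀ z, normOf (φ z) = s ↔ P z) (hbox : ∀ z, P z → ∀ i, a ≤ z i ∧ z i ≤ b) :
    numVecsOfNorm (Set.range φ) s = #{z ∈ Fintype.piFinset fun _ : Fin n ↦ Icc a b | P z} := by
  have himage : {x ∈ Set.range φ | normOf x = s} =
      φ '' ({z ∈ Fintype.piFinset fun _ : Fin n ↦ Icc a b | P z} : Finset (Fin n → ℤ)) := by
    ext x
    simp only [Set.mem_ofPred_eq, Set.mem_range, Set.mem_image, mem_coe, mem_filter,
      Fintype.mem_piFinset, mem_Icc]
    constructor
    · rintro ⟨⟨z, rfl⟩, hz⟩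
      exact ⟨z, ⟨hbox z ((hP z).mp hz), (hP z).mp hz⟩, rfl⟩
    · rintro ⟨z, ⟨-, hz⟩, rfl⟩
      exact ⟨⟨z, rfl⟩, (hP z).mpr hz⟩
  rw [numVecsOfNorm, himage, Set.ncard_image_of_injective _ hφ, Set.ncard_coe_finset]

lemma toLp_intVec_injective :
    Function.Injective fun z : Fin n → ℤ ↦ (WithLp.toLp 2 (intVec z) : EuclideanSpace ℝ (Fin n)) :=
  fun z z' h ↦ funext fun i ↦ by
    exact Int.cast_injective (congrArg (fun x : EuclideanSpace ℝ (Fin n) ↦ x i) h)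

lemma numVecsOfNorm_integerLattice (hk : k < 9) :
    numVecsOfNorm (integerLattice n) k =
      #{z ∈ Fintype.piFinset fun _ : Fin n ↦ Icc (-2 : ℤ) 2 | ∑ i, z i ^ 2 = (k : ℤ)} := by
  refine numVecsOfNorm_range toLp_intVec_injective (fun z ↦ ?_) fun z hz i ↦ ?_
  · rw [normOf_eq_sum_sq]
    simp only [intVec_apply]
    norm_cast
  · have hle := (single_le_sum (fun j _ ↦ sq_nonneg (z j)) (mem_univ i)).trans_eq hz
    constructor <;> nlinarith

lemma shadow_integerLattice :
    shadow (integerLattice (n + 1)) =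
      Set.range fun z : Fin (n + 1) → ℤ ↦ WithLp.toLp 2 (intVec z) + halfVector (n + 1) := by
  ext y
  rw [isHalfCharacteristic_halfVector.mem_shadow_iff isUnimodularLattice_integerLattice
    isOddLattice_integerLattice]
  simp only [integerLattice, Set.mem_range, eq_sub_iff_add_eq]

lemma numVecsOfNorm_shadow_integerLattice (hk : k ≤ 6) :
    numVecsOfNorm (shadow (integerLattice (n + 1))) k =
      #{z ∈ Fintype.piFinset fun _ : Fin (n + 1) ↦ Icc (-2 : ℤ) 1 |
        ∑ i, (2 * z i + 1) ^ 2 = 4 * (k : ℤ)} := by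
  rw [shadow_integerLattice]
  refine numVecsOfNorm_range ((add_left_injective _).comp toLp_intVec_injective) (fun z ↦ ?_)
    fun z hz i ↦ ?_
  · beta_reduce
    have hsum : 4 * normOf (WithLp.toLp 2 (intVec z) + halfVector (n + 1)) =
        ((∑ i, (2 * z i + 1) ^ 2 : ℤ) : ℝ) := by
      rw [normOf_eq_sum_sq, mul_sum]
      push_cast
      refine sum_congr rfl fun i _ ↦ ?_
      rw [PiLp.add_apply, halfVector]
      simp only [intVec_apply]
      ring
    rw [Function.comp_apply, ← mul_right_inj' four_ne_zero, hsum]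
    norm_cast
  · have hle := (single_le_sum (fun j _ ↦ sq_nonneg (2 * z j + 1)) (mem_univ i)).trans_eq hz
    constructor <;> nlinarith

lemma hasInitialCoeffs_thetaPowerSeries_integerLattice_four :
    HasInitialCoeffs (thetaPowerSeries (integerLattice 4)) ![1, 8, 24, 32, 24, 48, 96] := by
  intro k
  rw [coeff_thetaPowerSeries, numVecsOfNorm_integerLattice (by lia)]
  revert k
  exact_mod_cast show ∀ k : Fin 7, _ by decide +kernel

lemma hasInitialCoeffs_thetaPowerSeries_shadow_integerLattice_four :
    HasInitialCoeffs (thetaPowerSeries (shadow (integerLattice 4))) ![0, 16, 0, 64, 0, 96, 0] := by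
  intro k
  rw [coeff_thetaPowerSeries, numVecsOfNorm_shadow_integerLattice (by lia)]
  revert k
  exact_mod_cast show ∀ k : Fin 7, _ by decide +kernel

end IntegerLattice

section Multiplier

open UpperHalfPlane MatrixGroups
open scoped PowerSeries

namespace IsThetaPair

variable {k : ℕ} {f g : ℍ → ℂ}

lemma comp_T_smul_sub (h : IsThetaPair (-1) k f g) (hk : Even k) :
    IsThetaPair 1 k ((fun τ ↦ f (ModularGroup.T • τ)) - g)
      (-(f + fun τ ↦ f (ModularGroup.T • τ))) where
  map_T_smul_T_smul τ := by
    simp only [Pi.sub_apply, h.map_T_smul_T_smul, h.apply_T_smul neg_one_sq]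
    ring
  map_S_smul τ := by
    simp only [Pi.sub_apply, h.map_T_smul_S_smul, h.apply_S_smul neg_one_sq hk]
    ring
  map_T_smul_S_smul τ := by
    simp only [Pi.sub_apply, Pi.neg_apply, Pi.add_apply, h.map_T_smul_T_smul, h.map_S_smul,
      h.apply_T_smul neg_one_sq, h.apply_S_smul neg_one_sq hk]
    ring

lemma comp_T_smul_mul (h : IsThetaPair (-1) k f g) (hk : Even k) :
    IsThetaPair 1 (k + k) ((fun τ ↦ f (ModularGroup.T • τ)) * g)
      (-(f * fun τ ↦ f (ModularGroup.T • τ))) where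
  map_T_smul_T_smul τ := by
    simp only [Pi.mul_apply, h.map_T_smul_T_smul, h.apply_T_smul neg_one_sq]
    ring
  map_S_smul τ := by
    simp only [Pi.mul_apply, h.map_T_smul_S_smul, h.apply_S_smul neg_one_sq hk]
    ring
  map_T_smul_S_smul τ := by
    simp only [Pi.mul_apply, Pi.neg_apply, h.map_T_smul_T_smul, h.map_S_smul,
      h.apply_T_smul neg_one_sq, h.apply_S_smul neg_one_sq hk]
    ring

end IsThetaPair

/-- The nome expansion of the form `θ₃⁴ (θ₄⁴ - θ₂⁴) (θ₂θ₄)⁴ⁱ`, where `p` and `q` are those of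
`θ₃⁴` and `θ₂⁴`. -/
def multiplier (p q : ℂ⟦X⟧) (i : ℕ) : ℂ⟦X⟧ :=
  p * (PowerSeries.rescale (-1) p - q) * (PowerSeries.rescale (-1) p * q) ^ i

/-- The nome expansion of the form paired with `multiplier p q i`. -/
def multiplierPartner (p q : ℂ⟦X⟧) (i : ℕ) : ℂ⟦X⟧ :=
  q * -(p + PowerSeries.rescale (-1) p) * (-(p * PowerSeries.rescale (-1) p)) ^ i

theorem IsThetaPair.coeff_multiplier_relation {k l i j : ℕ} {f g F G : ℍ → ℂ} {p q P R : ℂ⟦X⟧}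
    (h : IsThetaPair (-1) k f g) (hk : Even k) (hf : HasNomeExpansion f p)
    (hg : HasNomeExpansion g q) (h' : IsThetaPair (-1) l F G) (hF : HasNomeExpansion F P)
    (hG : HasNomeExpansion G R) (hij : k + k + i * (k + k) + l = 12 * j + 14)
    (hvanish : ∀ t < j, 2 * (multiplier p q i * P).coeff (2 * t) +
      (multiplierPartner p q i * R).coeff (2 * t) = 0) :
    2 * (multiplier p q i * P).coeff (2 * (j + 1)) +
        (multiplierPartner p q i * R).coeff (2 * (j + 1)) =
      -24 * (j + 1) * (2 * (multiplier p q i * P).coeff (2 * j) +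
        (multiplierPartner p q i * R).coeff (2 * j)) := by
  have hpair := ((h.mul (h.comp_T_smul_sub hk)).mul ((h.comp_T_smul_mul hk).pow i)).mul h'
  rw [mul_one, one_pow, mul_one, neg_mul_neg, one_mul] at hpair
  have hfT := hf.comp_T_smul
  exact hpair.coeff_relation (((hf.mul (hfT.sub hg)).mul ((hfT.mul hg).pow i)).mul hF)
    (((hg.mul (hf.add hfT).neg).mul ((hf.mul hfT).neg.pow i)).mul hG) hij hvanish

end Multiplier

section MultiplierCoeffs

open PowerSeries
open scoped PowerSeries

variable {p q : ℂ⟦X⟧} (hp : HasInitialCoeffs p ![1, 8, 24, 32, 24, 48, 96])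
  (hq : HasInitialCoeffs q ![0, 16, 0, 64, 0, 96, 0])

include hp hq

lemma hasInitialCoeffs_mul_rescale_sub :
    HasInitialCoeffs (p * (rescale (-1) p - q)) ![1, -16, -144, -448, -912, -2016, -4032] := by
  have hp' := hp.rescale_neg_one (u := ![1, -8, 24, -32, 24, -48, 96]) (by decide)
  exact hp.mul (hp'.sub hq rfl) (by decide)

lemma hasInitialCoeffs_rescale_mul :
    HasInitialCoeffs (rescale (-1) p * q) ![0, 16, -128, 448, -1024, 2016, -3584] := by
  have hp' := hp.rescale_neg_one (u := ![1, -8, 24, -32, 24, -48, 96]) (by decide)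
  exact hp'.mul hq (by decide)

lemma hasInitialCoeffs_mul_neg_add_rescale :
    HasInitialCoeffs (q * -(p + rescale (-1) p)) ![0, -32, 0, -896, 0, -4032, 0] := by
  have hp' := hp.rescale_neg_one (u := ![1, -8, 24, -32, 24, -48, 96]) (by decide)
  exact hq.mul ((hp.add hp' rfl).neg rfl) (by decide)

omit hq in
lemma hasInitialCoeffs_neg_mul_rescale :
    HasInitialCoeffs (-(p * rescale (-1) p)) ![-1, 0, 16, 0, -112, 0, 448] := by
  have hp' := hp.rescale_neg_one (u := ![1, -8, 24, -32, 24, -48, 96]) (by decide)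
  exact (hp.mul hp' (u := ![1, 0, -16, 0, 112, 0, -448]) (by decide)).neg (by decide)

lemma hasInitialCoeffs_multiplier_one :
    HasInitialCoeffs (multiplier p q 1) ![0, 16, -384, 192, 3072, -3360, -4608] := by
  rw [multiplier, pow_one]
  exact (hasInitialCoeffs_mul_rescale_sub hp hq).mul (hasInitialCoeffs_rescale_mul hp hq)
    (by decide)

lemma hasInitialCoeffs_multiplierPartner_one :
    HasInitialCoeffs (multiplierPartner p q 1) ![0, 32, 0, 384, 0, -6720, 0] := by
  rw [multiplierPartner, pow_one]
  exact (hasInitialCoeffs_mul_neg_add_rescale hp hq).mul (hasInitialCoeffs_neg_mul_rescale hp)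
    (by decide)

lemma hasInitialCoeffs_multiplier_four :
    HasInitialCoeffs (multiplier p q 4) ![0, 0, 0, 0, 65536, -3145728, 56623104] := by
  have h := hasInitialCoeffs_rescale_mul hp hq
  have hsq := h.mul h (u := ![0, 0, 256, -4096, 30720, -147456, 527360]) (by decide)
  have hpow := hsq.mul hsq (u := ![0, 0, 0, 0, 65536, -2097152, 32505856]) (by decide)
  rw [← sq, ← sq, ← pow_mul] at hpow
  exact (hasInitialCoeffs_mul_rescale_sub hp hq).mul hpow (by decide)

lemma hasInitialCoeffs_multiplierPartner_four :
    HasInitialCoeffs (multiplierPartner p q 4) ![0, -32, 0, 1152, 0, -10176, 0] := by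
  have h := hasInitialCoeffs_neg_mul_rescale hp
  have hsq := h.mul h (u := ![1, 0, -32, 0, 480, 0, -4480]) (by decide)
  have hpow := hsq.mul hsq (u := ![1, 0, -64, 0, 1984, 0, -39680]) (by decide)
  rw [← sq, ← sq, ← pow_mul] at hpow
  exact (hasInitialCoeffs_mul_neg_add_rescale hp hq).mul hpow (by decide)

end MultiplierCoeffs

section ShadowCounts

open scoped PowerSeries

variable {n m : ℕ} {L : Set (EuclideanSpace ℝ (Fin n))} {S : Set (EuclideanSpace ℝ (Fin n))}

lemma numVecsOfNorm_eq_zero {s : ℝ} (hS : ∀ x ∈ S, normOf x ≠ s) : numVecsOfNorm S s = 0 := by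
  rw [numVecsOfNorm, Set.sep_eq_empty_iff_mem_false.mpr hS, Set.ncard_empty]

lemma HasMinNorm.numVecsOfNorm_eq_zero {r s : ℝ} (hL : HasMinNorm L r) (hs₀ : s ≠ 0)
    (hsr : s < r) : numVecsOfNorm L s = 0 :=
  _root_.numVecsOfNorm_eq_zero fun x hx hxs ↦ by
    have hx₀ : x ≠ 0 := by
      rintro rfl
      exact hs₀ (hxs.symm.trans (inner_zero_left _))
    exact hsr.not_ge (hL.2 ⟨x, hx, hx₀, hxs⟩)

lemma HasShadowMinNorm.numVecsOfNorm_eq_zero {r s : ℝ} (hL : HasShadowMinNorm L r)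
    (hsr : s < r) : numVecsOfNorm (shadow L) s = 0 :=
  _root_.numVecsOfNorm_eq_zero fun x hx hxs ↦ hsr.not_ge (hL.2 ⟨x, hx, hxs⟩)

namespace IsUnimodularLattice

lemma numVecsOfNorm_zero (h : IsUnimodularLattice L) : numVecsOfNorm L 0 = 1 := by
  have hzero : {x ∈ L | normOf x = 0} = {0} := by
    ext x
    simp only [normOf, inner_self_eq_zero, Set.mem_ofPred_eq, Set.mem_singleton_iff,
      and_iff_right_iff_imp]
    rintro rfl
    exact h.toSubmodule.zero_mem
  rw [numVecsOfNorm, hzero, Set.ncard_singleton]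

lemma numVecsOfNorm_shadow_eq_zero_iff (h : IsUnimodularLattice L) (ho : IsOddLattice L)
    {k : ℕ} : numVecsOfNorm (shadow L) k = 0 ↔ ∀ y ∈ shadow L, normOf y ≠ k := by
  obtain ⟨w, hw⟩ := h.exists_isHalfCharacteristic
  have := finite_setOf_normOf_eq (hw.hasSum_gaussian_shadow h ho UpperHalfPlane.I).summable k
  rw [← card_subtype_normOf_eq, Finite.card_eq_zero_iff, isEmpty_subtype]
  exact Subtype.forall

lemma numVecsOfNorm_shadow_eq_zero_of_not_modEq (h : IsUnimodularLattice L)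
    (ho : IsOddLattice L) (hn : n = 4 * m) {k : ℕ} (hk : ¬k ≡ m [MOD 2]) :
    numVecsOfNorm (shadow L) k = 0 :=
  numVecsOfNorm_eq_zero fun y hy hyk ↦ by
    obtain ⟨N, hN, hNm⟩ := h.exists_normOf_eq_of_mem_shadow ho hn hy
    rw [hN, Nat.cast_inj] at hyk
    exact hk (hyk ▸ hNm)

theorem coeff_multiplier_relation {i j : ℕ} (h : IsUnimodularLattice L) (ho : IsOddLattice L)
    (hn : n = 4 * m) (hm : Odd m) (hij : 4 * i + 2 * m = 12 * j + 10) :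
    let u := multiplier (thetaPowerSeries (integerLattice 4))
      (thetaPowerSeries (shadow (integerLattice 4))) i * thetaPowerSeries L
    let v := multiplierPartner (thetaPowerSeries (integerLattice 4))
      (thetaPowerSeries (shadow (integerLattice 4))) i * thetaPowerSeries (shadow L)
    (∀ t < j, 2 * u.coeff (2 * t) + v.coeff (2 * t) = 0) →
      2 * u.coeff (2 * (j + 1)) + v.coeff (2 * (j + 1)) =
        -24 * (j + 1) * (2 * u.coeff (2 * j) + v.coeff (2 * j)) := by
  have hZ := isUnimodularLattice_integerLattice (n := 4)
  have hZo := isOddLattice_integerLattice (n := 3)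
  have hZ₁ : 4 = 4 * 1 := rfl
  have hpairZ := hZ.isThetaPair_shadow hZo hZ₁
  have hpair := h.isThetaPair_shadow ho hn
  rw [pow_one] at hpairZ
  rw [hm.neg_one_pow] at hpair
  exact hpairZ.coeff_multiplier_relation (even_two_mul 1) hZ.hasNomeExpansion_thetaSeries
    (hZ.hasNomeExpansion_thetaSeries_shadow hZo hZ₁) hpair h.hasNomeExpansion_thetaSeries
    (h.hasNomeExpansion_thetaSeries_shadow ho hn) (by lia)

end IsUnimodularLattice

end ShadowCounts

section DimensionThirtySix

variable {L : Set (EuclideanSpace ℝ (Fin 36))}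

namespace IsUnimodularLattice

lemma numVecsOfNorm_shadow_eq_zero_of_even (h : IsUnimodularLattice L) (ho : IsOddLattice L)
    {k : ℕ} (hk : Even k) : numVecsOfNorm (shadow L) k = 0 :=
  h.numVecsOfNorm_shadow_eq_zero_of_not_modEq ho (m := 9) rfl <| by
    rw [Nat.even_iff] at hk
    rw [Nat.ModEq, hk]
    decide

lemma hasInitialCoeffs_thetaPowerSeries (h : IsUnimodularLattice L) (hmin : HasMinNorm L 3) :
    HasInitialCoeffs (thetaPowerSeries L) ![1, 0, 0, numVecsOfNorm L 3] := by
  intro i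
  rw [coeff_thetaPowerSeries]
  fin_cases i
  · simp [h.numVecsOfNorm_zero]
  · simp [hmin.numVecsOfNorm_eq_zero (s := 1) (by norm_num) (by norm_num)]
  · simp [hmin.numVecsOfNorm_eq_zero (s := 2) (by norm_num) (by norm_num)]
  · simp

lemma hasInitialCoeffs_thetaPowerSeries_shadow (h : IsUnimodularLattice L)
    (ho : IsOddLattice L) :
    HasInitialCoeffs (thetaPowerSeries (shadow L)) ![0, numVecsOfNorm (shadow L) 1, 0,
      numVecsOfNorm (shadow L) 3, 0, numVecsOfNorm (shadow L) 5] := by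
  have hr {k : ℕ} (hk : Even k) := h.numVecsOfNorm_shadow_eq_zero_of_even ho hk
  intro i
  rw [coeff_thetaPowerSeries]
  fin_cases i
  · simpa using hr (k := 0) (by decide)
  · simp
  · simpa using hr (k := 2) (by decide)
  · simp
  · simpa using hr (k := 4) (by decide)
  · simp

theorem numVecsOfNorm_three_add_shadow (h : IsUnimodularLattice L) (ho : IsOddLattice L)
    (hmin : HasMinNorm L 3) :
    numVecsOfNorm L 3 + numVecsOfNorm (shadow L) 3 + 60 * numVecsOfNorm (shadow L) 1 = 960 := by
  have hL := h.hasInitialCoeffs_thetaPowerSeries hmin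
  have hS := h.hasInitialCoeffs_thetaPowerSeries_shadow ho
  have hu := hasInitialCoeffs_multiplier_one
    hasInitialCoeffs_thetaPowerSeries_integerLattice_four
    hasInitialCoeffs_thetaPowerSeries_shadow_integerLattice_four
  have hv := hasInitialCoeffs_multiplierPartner_one
    hasInitialCoeffs_thetaPowerSeries_integerLattice_four
    hasInitialCoeffs_thetaPowerSeries_shadow_integerLattice_four
  have hrel : (2 * (16 * numVecsOfNorm L 3 + 3072) +
      (32 * numVecsOfNorm (shadow L) 3 + 384 * numVecsOfNorm (shadow L) 1) : ℂ) =
      -(24 * (1 + 1) * (-(2 * 384) + 32 * numVecsOfNorm (shadow L) 1)) := by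
    simpa [PowerSeries.coeff_mul, Finset.Nat.sum_antidiagonal_eq_sum_range_succ_mk,
      Finset.sum_range_succ, hL.coeff_eq, hS.coeff_eq, hu.coeff_eq, hv.coeff_eq]
      using h.coeff_multiplier_relation ho (i := 1) (j := 1) (m := 9) rfl (by decide) rfl
  have hsum : (numVecsOfNorm L 3 + numVecsOfNorm (shadow L) 3 +
      60 * numVecsOfNorm (shadow L) 1 : ℂ) = 960 := by
    linear_combination hrel / 32
  exact_mod_cast hsum

theorem numVecsOfNorm_shadow_five (h : IsUnimodularLattice L) (ho : IsOddLattice L)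
    (hmin : HasMinNorm L 3) (h₁ : numVecsOfNorm (shadow L) 1 = 0)
    (h₃ : numVecsOfNorm (shadow L) 3 = 0) : numVecsOfNorm (shadow L) 5 = 3833856 := by
  have hL := h.hasInitialCoeffs_thetaPowerSeries hmin
  have hS := h.hasInitialCoeffs_thetaPowerSeries_shadow ho
  have hu := hasInitialCoeffs_multiplier_four
    hasInitialCoeffs_thetaPowerSeries_integerLattice_four
    hasInitialCoeffs_thetaPowerSeries_shadow_integerLattice_four
  have hv := hasInitialCoeffs_multiplierPartner_four
    hasInitialCoeffs_thetaPowerSeries_integerLattice_four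
    hasInitialCoeffs_thetaPowerSeries_shadow_integerLattice_four
  rw [h₁, h₃] at hS
  have hrel : (2 * 56623104 + -(32 * numVecsOfNorm (shadow L) 5) : ℂ) =
      -(24 * (2 + 1) * (2 * 65536)) := by
    simpa [PowerSeries.coeff_mul, Finset.Nat.sum_antidiagonal_eq_sum_range_succ_mk,
      Finset.sum_range_succ, Nat.le_one_iff_eq_zero_or_eq_one, hL.coeff_eq, hS.coeff_eq,
      hu.coeff_eq, hv.coeff_eq]
      using h.coeff_multiplier_relation ho (i := 4) (j := 2) (m := 9) rfl (by decide) rfl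
  have hcount : (numVecsOfNorm (shadow L) 5 : ℂ) = 3833856 := by
    linear_combination -hrel / 32
  exact_mod_cast hcount

theorem hasSigma_twenty_iff (h : IsUnimodularLattice L) (ho : IsOddLattice L)
    (hmin : HasMinNorm L 3) :
    HasSigma L 20 ↔ numVecsOfNorm (shadow L) 1 = 0 ∧ numVecsOfNorm (shadow L) 3 = 0 := by
  constructor
  · rintro ⟨s, hs, hs₂₀⟩
    obtain rfl : s = 5 := by linarith
    exact ⟨hs.numVecsOfNorm_eq_zero (by norm_num), hs.numVecsOfNorm_eq_zero (by norm_num)⟩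
  · rintro ⟨h₁, h₃⟩
    have h₅ := h.numVecsOfNorm_shadow_five ho hmin h₁ h₃
    have hne (k : ℕ) := h.numVecsOfNorm_shadow_eq_zero_iff ho (k := k)
    refine ⟨5, ⟨?_, ?_⟩, by norm_num⟩
    · by_contra hno
      have := numVecsOfNorm_eq_zero fun y hy hy₅ ↦ hno ⟨y, hy, hy₅⟩
      lia
    · rintro _ ⟨y, hy, rfl⟩
      obtain ⟨N, hN, hN₂⟩ := h.exists_normOf_eq_of_mem_shadow ho (m := 9) rfl hy
      have hN₁ : N ≠ 1 := by
        rintro rfl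
        exact (hne 1).mp (by exact_mod_cast h₁) y hy hN
      have hN₃ : N ≠ 3 := by
        rintro rfl
        exact (hne 3).mp (by exact_mod_cast h₃) y hy hN
      rw [hN]
      exact_mod_cast (show 5 ≤ N by rw [Nat.ModEq] at hN₂; lia)

end IsUnimodularLattice

end DimensionThirtySix

theorem kissing_number_bound_dim36 {L : Set (EuclideanSpace ℝ (Fin 36))}
    (huni : IsUnimodularLattice L) (hodd : IsOddLattice L) (hmin : HasMinNorm L 3) :
    numVecsOfNorm L 3 ≤ 960 ∧ (numVecsOfNorm L 3 = 960 ↔ HasSigma L 20) := by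
  have hcount := huni.numVecsOfNorm_three_add_shadow hodd hmin
  rw [huni.hasSigma_twenty_iff hodd hmin]
  lia
end
end

section
/- Let C be a self-dual ℤ₄-code of length 36 such that the residue code C⁽¹⁾ is a binary doubly even [36,6,16] code and the torsion code C⁽²⁾ has minimum weight 3. Then A₄(C) is an (odd) unimodular lattice with min(A₄(C)) = 3 and σ(A₄(C)) = 20. -/
open scoped RealInnerProductSpace

noncomputable section

/-- The dual code `B⊥ = {x ∈ F₂ⁿ : x·y = 0 for all y ∈ B}`. -/
def dualCode {n : ℕ} (B : Submodule (ZMod 2) (Fin n → ZMod 2)) : Set (Fin n → ZMod 2) :=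
  {x | ∀ y ∈ B, ∑ i, x i * y i = 0}

/-- A binary code is doubly even if every codeword has Hamming weight divisible by 4. -/
def IsDoublyEven {n : ℕ} (B : Submodule (ZMod 2) (Fin n → ZMod 2)) : Prop :=
  ∀ c ∈ B, 4 ∣ hammingNorm c

/-- A set of binary words has minimum weight `d`:
`d` is the least Hamming weight among its nonzero elements. -/
def HasMinWeight {n : ℕ} (S : Set (Fin n → ZMod 2)) (d : ℕ) : Prop :=
  IsLeast {w : ℕ | ∃ c ∈ S, c ≠ 0 ∧ hammingNorm c = w} d

/-- The number of words of Hamming weight `w` in `S`. -/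
def weightCount {n : ℕ} (S : Set (Fin n → ZMod 2)) (w : ℕ) : ℕ :=
  Set.ncard {c ∈ S | hammingNorm c = w}

/-- The dual of a `ℤ₄`-code: `C⊥ = {x ∈ ℤ₄ⁿ : x·y = 0 for all y ∈ C}`. -/
def dualZ4 {n : ℕ} (C : Submodule (ZMod 4) (Fin n → ZMod 4)) : Set (Fin n → ZMod 4) :=
  {x | ∀ y ∈ C, ∑ i, x i * y i = 0}

/-- Reduction modulo 2 of a `ℤ₄`-word. -/
def toBinary {n : ℕ} (c : Fin n → ZMod 4) : Fin n → ZMod 2 :=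
  fun i => ZMod.castHom (by norm_num : (2 : ℕ) ∣ 4) (ZMod 2) (c i)

/-- The residue code `C⁽¹⁾ = {c mod 2 : c ∈ C}`. -/
def residueCode {n : ℕ} (C : Submodule (ZMod 4) (Fin n → ZMod 4)) : Set (Fin n → ZMod 2) :=
  {b | ∃ c ∈ C, b = toBinary c}

/-- The torsion code `C⁽²⁾ = {c mod 2 : c ∈ ℤ₄ⁿ, 2c ∈ C}`. -/
def torsionCode {n : ℕ} (C : Submodule (ZMod 4) (Fin n → ZMod 4)) : Set (Fin n → ZMod 2) :=
  {b | ∃ c : Fin n → ZMod 4, (2 : ZMod 4) • c ∈ C ∧ b = toBinary c}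

/-- Construction A: `A₄(C) = (1/2)·{x ∈ ℤⁿ : (x mod 4) ∈ C}`. -/
def constructionA4 {n : ℕ} (C : Submodule (ZMod 4) (Fin n → ZMod 4)) :
    Set (EuclideanSpace ℝ (Fin n)) :=
  {v | ∃ x : Fin n → ℤ, (fun i => (x i : ZMod 4)) ∈ C ∧ ∀ i, v i = (x i : ℝ) / 2}

/-!
Write `B` for the residue code, so that `B⊥` is the torsion code. A nonzero `x ∈ 2 A₄(C)` is odd
on the support of a word of `B`, or twice such a vector for `B⊥`, or divisible by `4`; this gives
the minimum norm `min (16, 4 · 3, 16) / 4 = 3`.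

The shadow consists of the `w / 2` with `w` an integer vector such that `2 (w · x) ≡ x · x` mod `8`
for all `x ∈ 2 A₄(C)`. Such a `w` reduces modulo `2` to `1 + b` for some `b ∈ B`, and
`w · w ≡ 36` mod `8`. As `B⊥` has minimum weight `3`, the second power moment of `B` leaves only
`16` and `20` as nonzero weights, so `w · w ≥ 36 - 20`, and then `w · w ≥ 20` by the congruence.
Conversely, let `b ∈ B` have weight `16` and let `w` reduce to `1 + b`. Adding twice a lift of a
word of `B⊥` makes `w` divisible by `4` on the support of `b`, because the only obstruction,
`(w / 2) · b` mod `2`, vanishes by the same congruence. Reducing `w` modulo `4` to entries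
`0` and `±1` then gives `w · w = 36 - 16 = 20`.
-/

section Duality

variable {K ι : Type*} [Field K] [Fintype ι]

theorem mem_of_forall_dotProduct_eq_zero {W : Submodule K (ι → K)} {z : ι → K}
    (h : ∀ t : ι → K, (∀ b ∈ W, t ⬝ᵥ b = 0) → t ⬝ᵥ z = 0) : z ∈ W := by
  classical
  by_contra hz
  obtain ⟨f, hfz, hfW⟩ := Submodule.exists_le_ker_of_notMem hz
  obtain ⟨t, rfl⟩ := (dotProductEquiv K ι).surjective f
  exact hfz (h t fun b hb ↦ hfW hb)

-- The restriction of `W⊥` to `S` is the dual of the shortened code: `W⊥ + Z` and `W ∩ Z⊥` are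
-- orthogonal complements, where `Z` consists of the words vanishing on `S`.
theorem exists_dotProduct_eq_zero_and_eqOn {W : Submodule K (ι → K)} {S : Set ι} {k : ι → K}
    (h : ∀ b ∈ W, (∀ i ∉ S, b i = 0) → k ⬝ᵥ b = 0) :
    ∃ t : ι → K, (∀ b ∈ W, t ⬝ᵥ b = 0) ∧ S.EqOn t k := by
  classical
  let dual : Submodule K (ι → K) := W.orthogonalBilin (dotProductBilin K K)
  let vanishing : Submodule K (ι → K) := Submodule.pi S fun _ ↦ ⊥
  have hk : k ∈ dual ⊔ vanishing := by
    refine mem_of_forall_dotProduct_eq_zero fun u hu ↦ ?_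
    rw [dotProduct_comm]
    refine h u (mem_of_forall_dotProduct_eq_zero fun s hs ↦ ?_) fun i hi ↦ ?_
    · rw [dotProduct_comm]
      refine hu s (Submodule.mem_sup_left fun b hb ↦ ?_)
      simpa [dotProduct_comm] using hs b hb
    · have hsingle : Pi.single i 1 ∈ vanishing := fun j hj ↦
        (Submodule.mem_bot K).2 (Pi.single_eq_of_ne (ne_of_mem_of_not_mem hj hi) 1)
      simpa using hu _ (Submodule.mem_sup_right hsingle)
  obtain ⟨t, ht, v, hv, rfl⟩ := Submodule.mem_sup.1 hk
  refine ⟨t, fun b hb ↦ ?_, fun i hi ↦ ?_⟩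
  · simpa [dotProduct_comm] using ht b hb
  · have hvi : v i = 0 := hv i hi
    simp [hvi]

end Duality

section BinaryCodes

variable {ι : Type*} [Fintype ι]

theorem hammingNorm_add_one (b : ι → ZMod 2) :
    hammingNorm (b + 1) + hammingNorm b = Fintype.card ι := by
  have hflip : ∀ a : ZMod 2, a + 1 ≠ 0 ↔ a = 0 := by decide
  simp only [hammingNorm, Pi.add_apply, Pi.one_apply, hflip]
  exact Finset.card_filter_add_card_filter_not _

theorem eq_of_support_subset_of_hammingNorm_le {b c : ι → ZMod 2}
    (hsupp : ∀ i, c i = 0 → b i = 0) (hle : hammingNorm c ≤ hammingNorm b) : b = c := by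
  have hbool : ∀ p q : ZMod 2, (p ≠ 0 ↔ q ≠ 0) → p = q := by decide
  have hsub : Finset.univ.filter (b · ≠ 0) ⊆ Finset.univ.filter (c · ≠ 0) :=
    Finset.monotone_filter_right _ fun i _ hbi ↦ mt (hsupp i) hbi
  have heq := Finset.eq_of_subset_of_card_le hsub hle
  funext i
  exact hbool _ _ (by simpa using Finset.ext_iff.1 heq i)

/-- The nontrivial character `a ↦ (-1) ^ a` of `𝔽₂`, with integer values. -/
def signChar : AddChar (ZMod 2) ℤ := AddChar.zmodChar 2 (by norm_num : (-1 : ℤ) ^ 2 = 1)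

theorem sum_signChar (b : ι → ZMod 2) :
    ∑ i, signChar (b i) = Fintype.card ι - 2 * (hammingNorm b : ℤ) := by
  have hsign : ∀ a : ZMod 2, signChar a = 1 - 2 * if a ≠ 0 then 1 else 0 := by decide
  simp only [hsign, Finset.sum_sub_distrib, ← Finset.mul_sum, Finset.sum_boole]
  simp [hammingNorm]

theorem sum_signChar_eq_zero {V : Type*} [AddCommGroup V] [Fintype V] {f : V →+ ZMod 2}
    (hf : f ≠ 0) : ∑ v, signChar (f v) = 0 := by
  have hinj : ∀ a : ZMod 2, signChar a = 1 → a = 0 := by decide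
  have hne : signChar.compAddMonoidHom f ≠ 0 := fun h ↦
    hf (AddMonoidHom.ext fun v ↦ hinj _ (DFunLike.congr_fun h v))
  exact AddChar.sum_eq_zero_iff_ne_zero.2 hne

-- The second Pless power moment: expanding the square, the cross terms `i ≠ j` are sums of a
-- nontrivial character over `B`.
theorem sum_sq_card_sub_two_mul_hammingNorm (B : Submodule (ZMod 2) (ι → ZMod 2)) [Fintype B]
    (hsep : ∀ i j, i ≠ j → ∃ b ∈ B, b i ≠ b j) :
    ∑ b : B, ((Fintype.card ι : ℤ) - 2 * hammingNorm (b : ι → ZMod 2)) ^ 2 =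
      (Fintype.card ι * Fintype.card B : ℤ) := by
  classical
  have hcross (i j : ι) : ∑ b : B, signChar (b.1 i) * signChar (b.1 j) =
      if i = j then (Fintype.card B : ℤ) else 0 := by
    have hmul : ∀ a c : ZMod 2, signChar a * signChar c = signChar (a + c) :=
      fun a c ↦ (signChar.map_add_eq_mul a c).symm
    simp only [hmul]
    split_ifs with hij
    · simp [hij, CharTwo.add_self_eq_zero]
    · obtain ⟨c, hc, hcij⟩ := hsep i j hij
      let f : B →+ ZMod 2 :=
        (Pi.evalAddMonoidHom (fun _ : ι ↦ ZMod 2) i + Pi.evalAddMonoidHom _ j).comp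
          B.subtype.toAddMonoidHom
      refine sum_signChar_eq_zero (f := f) fun hf ↦ hcij ?_
      exact CharTwo.add_eq_zero.1 (DFunLike.congr_fun hf ⟨c, hc⟩)
  calc ∑ b : B, ((Fintype.card ι : ℤ) - 2 * hammingNorm (b : ι → ZMod 2)) ^ 2
      = ∑ b : B, ∑ i, ∑ j, signChar (b.1 i) * signChar (b.1 j) := by
        simp only [← sum_signChar, sq, Finset.sum_mul_sum]
    _ = ∑ i, ∑ j, ∑ b : B, signChar (b.1 i) * signChar (b.1 j) := by
        rw [Finset.sum_comm]
        exact Finset.sum_congr rfl fun i _ ↦ Finset.sum_comm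
    _ = Fintype.card ι * Fintype.card B := by simp [hcross]

theorem exists_ne_of_hasMinWeight_dualCode {n d : ℕ} {B : Submodule (ZMod 2) (Fin n → ZMod 2)}
    (hmin : HasMinWeight (dualCode B) d) (hd : 3 ≤ d) {i j : Fin n} (hij : i ≠ j) :
    ∃ b ∈ B, b i ≠ b j := by
  by_contra! heq
  let t : Fin n → ZMod 2 := Pi.single i 1 + Pi.single j 1
  have ht : t ∈ dualCode B := fun b hb ↦ by
    change t ⬝ᵥ b = 0
    simp [t, add_dotProduct, heq b hb, CharTwo.add_self_eq_zero]
  have ht0 : t ≠ 0 := fun h ↦ by simpa [t, hij] using congrFun h i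
  have hsupp : Finset.univ.filter (t · ≠ 0) ⊆ {i, j} := fun k hk ↦ by
    by_contra hk'
    simp only [Finset.mem_insert, Finset.mem_singleton, not_or] at hk'
    simp [t, hk'.1, hk'.2] at hk
  have hle : hammingNorm t ≤ 2 := (Finset.card_le_card hsupp).trans Finset.card_le_two
  have hge : d ≤ hammingNorm t := hmin.2 ⟨t, ht, ht0, rfl⟩
  omega

-- By `hcard` and the second moment, the word `0` alone accounts for the sum over `B` of the
-- nonnegative numbers `(card ι - 2 wt b)² - s`.
theorem sq_card_sub_two_mul_hammingNorm_eq {B : Submodule (ZMod 2) (ι → ZMod 2)} {s : ℤ}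
    (hsep : ∀ i j, i ≠ j → ∃ b ∈ B, b i ≠ b j)
    (hle : ∀ b ∈ B, s ≤ ((Fintype.card ι : ℤ) - 2 * hammingNorm b) ^ 2)
    (hcard : (Fintype.card ι : ℤ) ^ 2 - s = Nat.card B * (Fintype.card ι - s))
    {b : ι → ZMod 2} (hb : b ∈ B) (hb0 : b ≠ 0) :
    ((Fintype.card ι : ℤ) - 2 * hammingNorm b) ^ 2 = s := by
  classical
  have : Fintype B := Fintype.ofFinite B
  let excess (c : B) : ℤ := ((Fintype.card ι : ℤ) - 2 * hammingNorm (c : ι → ZMod 2)) ^ 2 - s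
  have hsum : ∑ c, excess c = excess 0 := by
    have hzero : excess 0 = (Fintype.card ι : ℤ) ^ 2 - s := by simp [excess]
    rw [hzero, hcard, Finset.sum_sub_distrib, sum_sq_card_sub_two_mul_hammingNorm B hsep,
      Finset.sum_const, Finset.card_univ, nsmul_eq_mul, Nat.card_eq_fintype_card]
    ring
  rw [← Finset.add_sum_erase _ _ (Finset.mem_univ (0 : B)), add_eq_left,
    Finset.sum_eq_zero_iff_of_nonneg fun (c : B) _ ↦ sub_nonneg.2 (hle c c.2)] at hsum
  exact sub_eq_zero.1 (hsum ⟨b, hb⟩ (Finset.mem_erase.2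
    ⟨fun h ↦ hb0 (congrArg Subtype.val h), Finset.mem_univ _⟩))

-- The squares `(36 - 8 k)²` are at least `16`, with equality exactly for `k = 4` and `k = 5`.
theorem hammingNorm_eq_of_isDoublyEven {B : Submodule (ZMod 2) (Fin 36 → ZMod 2)}
    (hrank : Module.finrank (ZMod 2) B = 6) (heven : IsDoublyEven B)
    (hsep : ∀ i j, i ≠ j → ∃ b ∈ B, b i ≠ b j) {b : Fin 36 → ZMod 2} (hb : b ∈ B) (hb0 : b ≠ 0) :
    hammingNorm b = 16 ∨ hammingNorm b = 20 := by
  have hcard : Nat.card B = 64 := by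
    rw [Module.natCard_eq_pow_finrank (K := ZMod 2), hrank, Nat.card_zmod]; rfl
  have hle : ∀ c ∈ B, (16 : ℤ) ≤ ((Fintype.card (Fin 36) : ℤ) - 2 * hammingNorm c) ^ 2 := by
    intro c hc
    obtain ⟨k, hk⟩ := heven c hc
    rw [hk, Fintype.card_fin]
    push_cast
    rcases le_or_gt k 4 with hk4 | hk4 <;> nlinarith
  have hsq := sq_card_sub_two_mul_hammingNorm_eq hsep hle (by simp [hcard]) hb hb0
  rw [Fintype.card_fin, (by norm_num : (16 : ℤ) = 4 ^ 2), sq_eq_sq_iff_eq_or_eq_neg] at hsq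
  omega

end BinaryCodes

section UnimodularLattices

variable {n : ℕ} {L : Set (EuclideanSpace ℝ (Fin n))}

theorem add_mem_dualSet {u v : EuclideanSpace ℝ (Fin n)} (hu : u ∈ dualSet L)
    (hv : v ∈ dualSet L) : u + v ∈ dualSet L := fun y hy ↦ by
  obtain ⟨a, ha⟩ := hu y hy
  obtain ⟨b, hb⟩ := hv y hy
  exact ⟨a + b, by rw [inner_add_left, ha, hb, Int.cast_add]⟩

theorem IsUnimodularLattice.add_mem (hL : IsUnimodularLattice L)
    {u v : EuclideanSpace ℝ (Fin n)} (hu : u ∈ L) (hv : v ∈ L) : u + v ∈ L :=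
  hL.symm.subset (add_mem_dualSet (hL.subset hu) (hL.subset hv))

theorem normOf_add (u v : EuclideanSpace ℝ (Fin n)) :
    normOf (u + v) = normOf u + 2 * ⟪u, v⟫ + normOf v :=
  real_inner_add_add_self u v

theorem IsUnimodularLattice.add_mem_evenSublattice (hL : IsUnimodularLattice L)
    {u v : EuclideanSpace ℝ (Fin n)} (hu : u ∈ L) (hv : v ∈ L) {a b : ℤ} (ha : normOf u = a)
    (hb : normOf v = b) (hab : Even (a + b)) : u + v ∈ evenSublattice L := by
  obtain ⟨c, hc⟩ := hL.subset hu v hv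
  obtain ⟨d, hd⟩ := hab
  have hd' : (a + b : ℝ) = d + d := by exact_mod_cast hd
  refine ⟨hL.add_mem hu hv, d + c, ?_⟩
  rw [normOf_add, ha, hb, hc]
  push_cast
  linarith

-- If `(u, v)` were an integer for some `v` of odd norm, then `u` would pair integrally with
-- `L₀` and with `v + L₀`, that is with all of `L`.
theorem IsUnimodularLattice.odd_of_mem_shadow (hL : IsUnimodularLattice L)
    {u v : EuclideanSpace ℝ (Fin n)} (hu : u ∈ shadow L) (hv : v ∈ L) {a : ℤ} (hav : normOf v = a)
    (ha : Odd a) : ∃ m : ℤ, Odd m ∧ 2 * ⟪u, v⟫ = m := by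
  obtain ⟨hudual, huL⟩ := hu
  obtain ⟨m, hm⟩ := hudual _ (hL.add_mem_evenSublattice hv hv hav hav (ha.add_odd ha))
  rw [inner_add_right] at hm
  refine ⟨m, ?_, by linarith⟩
  by_contra hodd
  obtain ⟨k, rfl⟩ := Int.not_odd_iff_even.1 hodd
  have huv : ⟪u, v⟫ = k := by push_cast at hm; linarith
  refine huL (hL.symm.subset fun y hy ↦ ?_)
  obtain ⟨b, hb⟩ := hL.subset hy y hy
  rcases Int.even_or_odd b with ⟨c, rfl⟩ | hbodd
  · exact hudual y ⟨hy, c, by rw [normOf, hb]; push_cast; ring⟩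
  · obtain ⟨l, hl⟩ := hudual _ (hL.add_mem_evenSublattice hy hv hb hav (hbodd.add_odd ha))
    rw [inner_add_right, huv] at hl
    exact ⟨l - k, by push_cast; linarith⟩

theorem IsUnimodularLattice.mem_shadow_iff (hL : IsUnimodularLattice L) (hodd : IsOddLattice L)
    {u : EuclideanSpace ℝ (Fin n)} :
    u ∈ shadow L ↔ ∀ v ∈ L, ∃ m : ℤ, 2 * ⟪u, v⟫ - normOf v = 2 * m := by
  constructor
  · intro hu v hv
    obtain ⟨a, ha⟩ := hL.subset hv v hv
    rcases Int.even_or_odd a with ⟨c, rfl⟩ | haodd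
    · have hnorm : normOf v = 2 * c := by rw [normOf, ha]; push_cast; ring
      obtain ⟨m, hm⟩ := hu.1 v ⟨hv, c, hnorm⟩
      exact ⟨m - c, by rw [hm, hnorm]; push_cast; ring⟩
    · obtain ⟨m, hmodd, hm⟩ := hL.odd_of_mem_shadow hu hv ha haodd
      obtain ⟨c, hc⟩ := hmodd.sub_odd haodd
      have hc' : (m - a : ℝ) = c + c := by exact_mod_cast hc
      exact ⟨c, by rw [hm, normOf, ha]; linarith⟩
  · intro h
    refine ⟨fun v hv ↦ ?_, fun hu ↦ ?_⟩
    · obtain ⟨m, hm⟩ := h v hv.1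
      obtain ⟨c, hc⟩ := hv.2
      exact ⟨m + c, by push_cast; linarith⟩
    · obtain ⟨y, hy, a, haodd, ha⟩ := hodd
      obtain ⟨m, hm⟩ := h y hy
      obtain ⟨k, hk⟩ := hL.subset hu y hy
      have heq : 2 * k - a = 2 * m := by rw [hk, ha] at hm; exact_mod_cast hm
      exact Int.not_even_iff_odd.2 haodd ⟨k - m, by linarith⟩

end UnimodularLattices

section IntegerVectors

variable {ι : Type*}

/-- Entrywise reduction modulo `m` of integer vectors. -/
def reduce (m : ℕ) : (ι → ℤ) →+* (ι → ZMod m) := (Int.castRingHom (ZMod m)).compLeft ι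

@[simp]
theorem reduce_apply (m : ℕ) (x : ι → ℤ) (i : ι) : reduce m x i = x i := rfl

theorem reduce_surjective (m : ℕ) : Function.Surjective (reduce m : (ι → ℤ) → ι → ZMod m) :=
  ZMod.intCast_surjective.comp_left

theorem reduce_dotProduct [Fintype ι] (m : ℕ) (x y : ι → ℤ) :
    reduce m x ⬝ᵥ reduce m y = ((x ⬝ᵥ y : ℤ) : ZMod m) :=
  (RingHom.map_dotProduct (Int.castRingHom (ZMod m)) x y).symm

theorem dvd_dotProduct_iff [Fintype ι] (m : ℕ) (x y : ι → ℤ) :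
    (m : ℤ) ∣ x ⬝ᵥ y ↔ reduce m x ⬝ᵥ reduce m y = 0 := by
  rw [reduce_dotProduct, ZMod.intCast_zmod_eq_zero_iff_dvd]

theorem reduce_eq_zero_iff_exists {m : ℕ} {x : ι → ℤ} :
    reduce m x = 0 ↔ ∃ y : ι → ℤ, x = m • y := by
  simp only [funext_iff, reduce_apply, Pi.zero_apply, ZMod.intCast_zmod_eq_zero_iff_dvd]
  exact ⟨fun h ↦ by choose y hy using h; exact ⟨y, by simpa using hy⟩,
    fun ⟨y, hy⟩ i ↦ ⟨y i, by simpa using hy i⟩⟩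

theorem hammingNorm_reduce_le [Fintype ι] (x : ι → ℤ) :
    (hammingNorm (reduce 2 x) : ℤ) ≤ x ⬝ᵥ x := by
  rw [hammingNorm, ← Finset.sum_boole, dotProduct]
  refine Finset.sum_le_sum fun i _ ↦ ?_
  split_ifs with h
  · have hi : x i ≠ 0 := fun hi ↦ h (by simp [hi])
    have := mul_self_pos.2 hi
    omega
  · exact mul_self_nonneg _

/-- The lift of a binary word to an integer vector with entries `0` and `1`. -/
def binaryLift (t : ι → ZMod 2) : ι → ℤ := fun i ↦ (t i).val

@[simp]
theorem reduce_binaryLift (t : ι → ZMod 2) : reduce 2 (binaryLift t) = t := by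
  ext i
  simp [binaryLift]

theorem binaryLift_dotProduct_self [Fintype ι] (t : ι → ZMod 2) :
    binaryLift t ⬝ᵥ binaryLift t = hammingNorm t := by
  have hsq : ∀ a : ZMod 2, (a.val : ℤ) * a.val = if a ≠ 0 then 1 else 0 := by decide
  simp only [dotProduct, binaryLift, hsq, Finset.sum_boole, hammingNorm]

theorem two_nsmul_dotProduct_self [Fintype ι] (x : ι → ℤ) :
    (2 • x) ⬝ᵥ (2 • x) = 4 * x ⬝ᵥ x := by
  rw [smul_dotProduct, dotProduct_smul, smul_smul, nsmul_eq_mul]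
  norm_num

theorem eight_dvd_dotProduct_self_sub_card [Fintype ι] {z : ι → ℤ}
    (hz : reduce 2 z = 1) : 8 ∣ z ⬝ᵥ z - Fintype.card ι := by
  have hsum : z ⬝ᵥ z - Fintype.card ι = ∑ i, (z i ^ 2 - 1) := by
    simp [dotProduct, sq]
  rw [hsum]
  exact Finset.dvd_sum fun i _ ↦
    Int.eight_dvd_sq_sub_one_of_odd (ZMod.intCast_eq_one_iff_odd.1 (congrFun hz i))

theorem eight_dvd_dotProduct_self_sub_half_dotProduct [Fintype ι] {w : ι → ℤ}
    {b : ι → ZMod 2} (hwb : reduce 2 w = b + 1) :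
    8 ∣ w ⬝ᵥ w - (Fintype.card ι + 4 * (fun i ↦ w i / 2) ⬝ᵥ binaryLift b - hammingNorm b) := by
  have hterm (i : ι) : 8 ∣ w i * w i -
      (1 + 4 * (w i / 2 * binaryLift b i) - binaryLift b i * binaryLift b i) := by
    have hi : (w i : ZMod 2) = b i + 1 := congrFun hwb i
    rcases (by decide : ∀ a : ZMod 2, a = 0 ∨ a = 1) (b i) with hbi | hbi
    · rw [hbi, zero_add, ZMod.intCast_eq_one_iff_odd] at hi
      simpa [binaryLift, hbi, sq] using Int.eight_dvd_sq_sub_one_of_odd hi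
    · rw [hbi, CharTwo.add_self_eq_zero, ZMod.intCast_eq_zero_iff_even] at hi
      obtain ⟨k, hk⟩ := hi
      obtain ⟨m, hm⟩ := Int.even_mul_pred_self k
      have hhalf : w i / 2 = k := by omega
      refine ⟨m, ?_⟩
      rw [hhalf, hk, binaryLift, hbi, ZMod.val_one]
      push_cast
      linarith
  have hsum := Finset.dvd_sum fun i (_ : i ∈ Finset.univ) ↦ hterm i
  rw [← binaryLift_dotProduct_self]
  simpa [dotProduct, Finset.sum_sub_distrib, Finset.sum_add_distrib, Finset.mul_sum] using hsum

theorem exists_dotProduct_self_eq_hammingNorm_reduce [Fintype ι] {w : ι → ℤ}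
    (hw : ∀ i, reduce 2 w i = 0 → 4 ∣ w i) :
    ∃ y : ι → ℤ, ((w + 4 • y) ⬝ᵥ (w + 4 • y) : ℤ) = hammingNorm (reduce 2 w) := by
  refine ⟨fun i ↦ -((w i + 1) / 4), ?_⟩
  rw [hammingNorm, ← Finset.sum_boole, dotProduct]
  refine Finset.sum_congr rfl fun i _ ↦ ?_
  rw [Pi.add_apply, Pi.smul_apply, nsmul_eq_mul, Nat.cast_ofNat, ← sq]
  split_ifs with hi
  · have hodd : Odd (w i) := by
      rwa [reduce_apply, ne_eq, ZMod.intCast_eq_zero_iff_even, Int.not_even_iff_odd] at hi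
    obtain ⟨k, hk⟩ := hodd
    rw [sq_eq_one_iff]
    omega
  · obtain ⟨k, hk⟩ := hw i (not_not.1 hi)
    rw [sq_eq_zero_iff]
    omega

theorem exists_addCircle_eq_dotProduct [Fintype ι] {H : AddSubgroup (ι → ℤ)}
    (q : H →+ AddCircle (1 : ℚ)) :
    ∃ r : ι → ℚ, ∀ x : H, q x = ((r ⬝ᵥ fun i ↦ (x.1 i : ℚ) : ℚ) : AddCircle (1 : ℚ)) := by
  classical
  obtain ⟨φ, rfl⟩ := CharacterModule.dual_surjective_of_injective H.subtype.toIntLinearMap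
    Subtype.val_injective q
  choose r hr using fun i ↦ QuotientAddGroup.mk_surjective (φ (Pi.single i 1))
  refine ⟨r, fun x ↦ ?_⟩
  have hbasis : x.1 = ∑ i, x.1 i • Pi.single i (1 : ℤ) := by
    simpa [← Pi.single_smul] using (Finset.univ_sum_single x.1).symm
  change φ x.1 = _
  conv_lhs => rw [hbasis]
  simp only [map_sum, map_zsmul, ← hr, dotProduct]
  change _ = QuotientAddGroup.mk' _ _
  rw [map_sum]
  refine Finset.sum_congr rfl fun i _ ↦ ?_
  rw [mul_comm, ← zsmul_eq_mul, map_zsmul]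
  rfl

end IntegerVectors

section ConstructionA

variable {n : ℕ}

/-- The vector `x / 2`, through which integer vectors parametrise `A₄(C)`. -/
def halfVec (x : Fin n → ℤ) : EuclideanSpace ℝ (Fin n) := WithLp.toLp 2 fun i ↦ (x i : ℝ) / 2

theorem inner_halfVec (x y : Fin n → ℤ) : ⟪halfVec x, halfVec y⟫ = ((x ⬝ᵥ y : ℤ) : ℝ) / 4 := by
  simp only [halfVec, PiLp.inner_apply, RCLike.inner_apply, conj_trivial, dotProduct,
    Int.cast_sum, Int.cast_mul, Finset.sum_div]
  exact Finset.sum_congr rfl fun i _ ↦ by ring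

theorem normOf_halfVec (x : Fin n → ℤ) : normOf (halfVec x) = ((x ⬝ᵥ x : ℤ) : ℝ) / 4 :=
  inner_halfVec x x

theorem exists_inner_halfVec_eq_iff {x y : Fin n → ℤ} :
    (∃ m : ℤ, ⟪halfVec x, halfVec y⟫ = m) ↔ 4 ∣ x ⬝ᵥ y := by
  refine exists_congr fun m ↦ ?_
  rw [inner_halfVec, div_eq_iff (by norm_num), mul_comm]
  exact_mod_cast Iff.rfl

theorem exists_eq_halfVec_of_mem_dualSet {L : Set (EuclideanSpace ℝ (Fin n))}
    (hL : ∀ j, halfVec (Pi.single j 4) ∈ L) {v : EuclideanSpace ℝ (Fin n)} (hv : v ∈ dualSet L) :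
    ∃ w, v = halfVec w := by
  choose w hw using fun j ↦ hv _ (hL j)
  refine ⟨w, ?_⟩
  ext j
  have hsingle : halfVec (Pi.single j 4) = EuclideanSpace.single j (2 : ℝ) := by
    ext i
    rcases eq_or_ne i j with rfl | hij
    · norm_num [halfVec]
    · simp [halfVec, hij]
  have hj := hw j
  rw [hsingle, EuclideanSpace.inner_single_right] at hj
  simp only [conj_trivial] at hj
  simp only [halfVec]
  linarith

variable {C : Submodule (ZMod 4) (Fin n → ZMod 4)}

/-- The integer vectors whose reduction modulo `4` lies in `C`, that is `2 A₄(C)`. -/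
def integerLift (C : Submodule (ZMod 4) (Fin n → ZMod 4)) : AddSubgroup (Fin n → ℤ) :=
  C.toAddSubgroup.comap (reduce 4 : (Fin n → ℤ) →+* _).toAddMonoidHom

theorem mem_integerLift {x : Fin n → ℤ} : x ∈ integerLift C ↔ reduce 4 x ∈ C := Iff.rfl

theorem constructionA4_eq_image (C : Submodule (ZMod 4) (Fin n → ZMod 4)) :
    constructionA4 C = halfVec '' integerLift C := by
  ext v
  exact exists_congr fun x ↦ and_congr_right fun _ ↦
    ⟨fun h ↦ by ext i; exact (h i).symm, fun h i ↦ h ▸ rfl⟩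

theorem halfVec_mem_constructionA4 {x : Fin n → ℤ} (hx : x ∈ integerLift C) :
    halfVec x ∈ constructionA4 C :=
  ⟨x, hx, fun _ ↦ rfl⟩

theorem four_nsmul_mem_integerLift (x : Fin n → ℤ) : 4 • x ∈ integerLift C := by
  have hzero : reduce 4 (4 • x) = 0 := reduce_eq_zero_iff_exists.2 ⟨x, rfl⟩
  rw [mem_integerLift, hzero]
  exact C.zero_mem

theorem toBinary_reduce (x : Fin n → ℤ) : toBinary (reduce 4 x) = reduce 2 x := by
  ext i
  simp only [toBinary, reduce_apply, map_intCast]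

theorem mem_residueCode_iff {b : Fin n → ZMod 2} :
    b ∈ residueCode C ↔ ∃ x ∈ integerLift C, reduce 2 x = b := by
  constructor
  · rintro ⟨c, hc, rfl⟩
    obtain ⟨x, rfl⟩ := reduce_surjective 4 c
    exact ⟨x, hc, (toBinary_reduce x).symm⟩
  · rintro ⟨x, hx, rfl⟩
    exact ⟨_, hx, (toBinary_reduce x).symm⟩

theorem two_nsmul_mem_integerLift_iff {x : Fin n → ℤ} :
    2 • x ∈ integerLift C ↔ reduce 2 x ∈ torsionCode C := by
  have hreduce : reduce 4 (2 • x) = (2 : ZMod 4) • reduce 4 x := by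
    ext i; simp
  rw [mem_integerLift, hreduce, ← toBinary_reduce]
  constructor
  · exact fun hx ↦ ⟨_, hx, rfl⟩
  · rintro ⟨c, hc, hxc⟩
    have hdouble : ∀ a b : ZMod 4, ZMod.castHom (by norm_num : 2 ∣ 4) (ZMod 2) a =
      ZMod.castHom (by norm_num : 2 ∣ 4) (ZMod 2) b → 2 * a = 2 * b := by decide
    convert hc using 1
    ext i
    exact hdouble _ _ (congrFun hxc i)

theorem two_nsmul_binaryLift_mem_integerLift {t : Fin n → ZMod 2} (ht : t ∈ torsionCode C) :
    2 • binaryLift t ∈ integerLift C :=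
  two_nsmul_mem_integerLift_iff.2 (by rwa [reduce_binaryLift])

theorem single_four_mem_integerLift (j : Fin n) : Pi.single j 4 ∈ integerLift C := by
  simpa [← Pi.single_smul] using four_nsmul_mem_integerLift (C := C) (Pi.single j 1)

theorem mem_integerLift_iff_of_selfDual (hsd : (C : Set (Fin n → ZMod 4)) = dualZ4 C)
    {w : Fin n → ℤ} : w ∈ integerLift C ↔ ∀ x ∈ integerLift C, 4 ∣ w ⬝ᵥ x := by
  have hdual : reduce 4 w ∈ C ↔ reduce 4 w ∈ dualZ4 C := Set.ext_iff.1 hsd _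
  refine hdual.trans ⟨fun h x hx ↦ (dvd_dotProduct_iff 4 w x).2 (h _ hx), fun h c hc ↦ ?_⟩
  obtain ⟨x, rfl⟩ := reduce_surjective 4 c
  exact (dvd_dotProduct_iff 4 w x).1 (h x hc)

theorem isUnimodularLattice_constructionA4 (hsd : (C : Set (Fin n → ZMod 4)) = dualZ4 C) :
    IsUnimodularLattice (constructionA4 C) := by
  rw [IsUnimodularLattice]
  refine Set.Subset.antisymm ?_ fun v hv ↦ ?_
  · rw [constructionA4_eq_image]
    rintro _ ⟨w, hw, rfl⟩ _ ⟨x, hx, rfl⟩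
    exact exists_inner_halfVec_eq_iff.2 ((mem_integerLift_iff_of_selfDual hsd).1 hw x hx)
  · obtain ⟨w, rfl⟩ := exists_eq_halfVec_of_mem_dualSet
      (fun j ↦ halfVec_mem_constructionA4 (single_four_mem_integerLift j)) hv
    exact halfVec_mem_constructionA4 ((mem_integerLift_iff_of_selfDual hsd).2 fun x hx ↦
      exists_inner_halfVec_eq_iff.1 (hv _ (halfVec_mem_constructionA4 hx)))

theorem torsionCode_eq_dualCode (hsd : (C : Set (Fin n → ZMod 4)) = dualZ4 C)
    {B : Submodule (ZMod 2) (Fin n → ZMod 2)} (hB : (B : Set (Fin n → ZMod 2)) = residueCode C) :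
    torsionCode C = dualCode B := by
  have hmemB {b : Fin n → ZMod 2} : b ∈ B ↔ ∃ x ∈ integerLift C, reduce 2 x = b :=
    (Set.ext_iff.1 hB b).trans mem_residueCode_iff
  ext t
  obtain ⟨s, rfl⟩ := reduce_surjective 2 t
  have hdvd (x : Fin n → ℤ) : 4 ∣ (2 • s) ⬝ᵥ x ↔ reduce 2 s ⬝ᵥ reduce 2 x = 0 := by
    rw [← dvd_dotProduct_iff, smul_dotProduct, nsmul_eq_mul]
    omega
  rw [← two_nsmul_mem_integerLift_iff, mem_integerLift_iff_of_selfDual hsd]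
  simp only [hdvd]
  constructor
  · intro h b hb
    obtain ⟨x, hx, rfl⟩ := hmemB.1 hb
    exact h x hx
  · exact fun h x hx ↦ h _ (hmemB.2 ⟨x, hx, rfl⟩)

theorem min_le_dotProduct_self_of_mem_integerLift {d₁ d₂ : ℕ}
    (hres : HasMinWeight (residueCode C) d₁) (htor : HasMinWeight (torsionCode C) d₂)
    {x : Fin n → ℤ} (hx : x ∈ integerLift C) (hx0 : x ≠ 0) :
    ((min d₁ (min (4 * d₂) 16) : ℕ) : ℤ) ≤ x ⬝ᵥ x := by
  by_cases hx2 : reduce 2 x = 0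
  · obtain ⟨t, rfl⟩ := reduce_eq_zero_iff_exists.1 hx2
    rw [two_nsmul_dotProduct_self]
    by_cases ht2 : reduce 2 t = 0
    · obtain ⟨s, rfl⟩ := reduce_eq_zero_iff_exists.1 ht2
      rw [two_nsmul_dotProduct_self]
      have hs0 : s ⬝ᵥ s ≠ 0 := fun hs ↦ hx0 (by simp [dotProduct_self_eq_zero.1 hs])
      have hs : 0 ≤ s ⬝ᵥ s := Finset.sum_nonneg fun i _ ↦ mul_self_nonneg (s i)
      omega
    · have hd₂ := htor.2 ⟨_, two_nsmul_mem_integerLift_iff.1 hx, ht2, rfl⟩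
      have := hammingNorm_reduce_le t
      omega
  · have hd₁ := hres.2 ⟨_, mem_residueCode_iff.2 ⟨x, hx, rfl⟩, hx2, rfl⟩
    have := hammingNorm_reduce_le x
    omega

theorem hasMinNorm_constructionA4 {d₁ d₂ : ℕ} (hres : HasMinWeight (residueCode C) d₁)
    (htor : HasMinWeight (torsionCode C) d₂) (hd₁ : 4 * d₂ ≤ d₁) (hd₂ : d₂ ≤ 4) :
    HasMinNorm (constructionA4 C) d₂ := by
  constructor
  · obtain ⟨t, ht, ht0, rfl⟩ := htor.1
    have hnorm : normOf (halfVec (2 • binaryLift t)) = hammingNorm t := by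
      rw [normOf_halfVec, two_nsmul_dotProduct_self, binaryLift_dotProduct_self]
      push_cast
      ring
    refine ⟨_, halfVec_mem_constructionA4 (two_nsmul_binaryLift_mem_integerLift ht),
      fun h0 ↦ ht0 ?_, hnorm⟩
    have hzero : (hammingNorm t : ℝ) = 0 := by rw [← hnorm, h0, normOf, inner_self_eq_zero]
    exact hammingNorm_eq_zero.1 (by exact_mod_cast hzero)
  · rw [constructionA4_eq_image]
    rintro _ ⟨_, ⟨x, hx, rfl⟩, hx0, rfl⟩
    have hx0' : x ≠ 0 := by
      rintro rfl
      exact hx0 (by ext i; simp [halfVec])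
    have hle : 4 * (d₂ : ℤ) ≤ x ⬝ᵥ x := by
      have := min_le_dotProduct_self_of_mem_integerLift hres htor hx hx0'
      omega
    have hle' : (4 * d₂ : ℝ) ≤ ((x ⬝ᵥ x : ℤ) : ℝ) := by exact_mod_cast hle
    rw [normOf_halfVec]
    linarith

theorem HasMinNorm.isOddLattice {L : Set (EuclideanSpace ℝ (Fin n))} {d : ℕ}
    (hL : HasMinNorm L d) (hd : Odd d) : IsOddLattice L := by
  obtain ⟨x, hx, -, hnorm⟩ := hL.1
  exact ⟨x, hx, d, by exact_mod_cast hd, by exact_mod_cast hnorm⟩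

end ConstructionA

section Characteristic

variable {n : ℕ} {C : Submodule (ZMod 4) (Fin n → ZMod 4)}

/-- `w` is characteristic for `C`: in terms of `u = w / 2` and `v = x / 2` this is the condition
`2 (u, v) ≡ (v, v) mod 2` for all `v ∈ A₄(C)`, which describes the shadow. -/
def IsCharacteristic (C : Submodule (ZMod 4) (Fin n → ZMod 4)) (w : Fin n → ℤ) : Prop :=
  ∀ x ∈ integerLift C, 8 ∣ 2 * w ⬝ᵥ x - x ⬝ᵥ x

theorem halfVec_mem_shadow_iff (hsd : (C : Set (Fin n → ZMod 4)) = dualZ4 C)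
    (hodd : IsOddLattice (constructionA4 C)) {w : Fin n → ℤ} :
    halfVec w ∈ shadow (constructionA4 C) ↔ IsCharacteristic C w := by
  rw [(isUnimodularLattice_constructionA4 hsd).mem_shadow_iff hodd, constructionA4_eq_image,
    Set.forall_mem_image]
  refine forall₂_congr fun x _ ↦ exists_congr fun m ↦ ?_
  rw [inner_halfVec, normOf_halfVec]
  have hcast : (2 * (w ⬝ᵥ x : ℤ) - (x ⬝ᵥ x : ℤ) : ℝ) = (8 * m : ℝ) ↔
      2 * w ⬝ᵥ x - x ⬝ᵥ x = 8 * m := by exact_mod_cast Iff.rfl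
  rw [← hcast]
  constructor <;> intro h <;> linarith

theorem exists_eq_halfVec_of_mem_shadow {u : EuclideanSpace ℝ (Fin n)}
    (hu : u ∈ shadow (constructionA4 C)) : ∃ w, u = halfVec w := by
  refine exists_eq_halfVec_of_mem_dualSet (fun j ↦ ?_) hu.1
  refine ⟨halfVec_mem_constructionA4 (single_four_mem_integerLift j), 2, ?_⟩
  rw [normOf_halfVec, dotProduct_single, Pi.single_eq_same]
  norm_num

theorem hasSigma_constructionA4 (hsd : (C : Set (Fin n → ZMod 4)) = dualZ4 C)
    (hodd : IsOddLattice (constructionA4 C)) {s : ℤ}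
    (hs : IsLeast {m | ∃ w, IsCharacteristic C w ∧ w ⬝ᵥ w = m} s) :
    HasSigma (constructionA4 C) s := by
  refine ⟨s / 4, ⟨?_, ?_⟩, by ring⟩
  · obtain ⟨w, hw, rfl⟩ := hs.1
    exact ⟨_, (halfVec_mem_shadow_iff hsd hodd).2 hw, normOf_halfVec w⟩
  · rintro _ ⟨u, hu, rfl⟩
    obtain ⟨w, rfl⟩ := exists_eq_halfVec_of_mem_shadow hu
    rw [normOf_halfVec]
    gcongr
    exact hs.2 ⟨w, (halfVec_mem_shadow_iff hsd hodd).1 hu, rfl⟩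

-- `x ↦ (x · x) / 8 mod 1` is additive on `2 A₄(C)`, because `x · y` is divisible by `4` there,
-- and it extends to `ℤⁿ` because `ℚ/ℤ` is injective.
theorem exists_dotProduct_sub_div_eight_eq_intCast (hsd : (C : Set (Fin n → ZMod 4)) = dualZ4 C) :
    ∃ r : Fin n → ℚ, ∀ x ∈ integerLift C,
      ∃ m : ℤ, (r ⬝ᵥ fun i ↦ (x i : ℚ)) - (x ⬝ᵥ x : ℤ) / 8 = m := by
  have hcoe {a b : ℚ} : (a : AddCircle (1 : ℚ)) = b ↔ ∃ m : ℤ, b - a = m := by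
    rw [eq_comm, ← sub_eq_zero, ← AddCircle.coe_sub, AddCircle.coe_eq_zero_iff]
    simp [eq_comm]
  let q : integerLift C →+ AddCircle (1 : ℚ) :=
    AddMonoidHom.mk' (fun x ↦ (((x.1 ⬝ᵥ x.1 : ℤ) / 8 : ℚ) : AddCircle (1 : ℚ))) fun x y ↦ by
      obtain ⟨m, hm⟩ := (mem_integerLift_iff_of_selfDual hsd).1 x.2 y y.2
      rw [← AddCircle.coe_add, hcoe]
      refine ⟨-m, ?_⟩
      rw [AddSubgroup.coe_add, add_dotProduct, dotProduct_add, dotProduct_add,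
        dotProduct_comm y.1 x.1, hm]
      push_cast
      ring
  obtain ⟨r, hr⟩ := exists_addCircle_eq_dotProduct q
  exact ⟨r, fun x hx ↦ hcoe.1 (hr ⟨x, hx⟩)⟩

theorem exists_isCharacteristic (hsd : (C : Set (Fin n → ZMod 4)) = dualZ4 C) :
    ∃ w, IsCharacteristic C w := by
  obtain ⟨r, hr⟩ := exists_dotProduct_sub_div_eight_eq_intCast hsd
  have hint (j : Fin n) : ∃ m : ℤ, (m : ℚ) = 4 * r j := by
    obtain ⟨m, hm⟩ := hr _ (single_four_mem_integerLift j)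
    simp only [dotProduct, Pi.single_apply, Int.cast_ite, mul_ite, ite_mul, Finset.sum_ite_eq',
      Finset.mem_univ, if_true, Int.cast_zero, mul_zero, zero_mul] at hm
    refine ⟨m + 2, ?_⟩
    push_cast at hm ⊢
    linarith
  choose w hw using hint
  refine ⟨w, fun x hx ↦ ?_⟩
  obtain ⟨m, hm⟩ := hr x hx
  have hwx : ((w ⬝ᵥ x : ℤ) : ℚ) = 4 * r ⬝ᵥ fun i ↦ (x i : ℚ) := by
    simp only [dotProduct, Int.cast_sum, Int.cast_mul, hw, Finset.mul_sum, mul_assoc]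
  have heq : (2 * (w ⬝ᵥ x : ℤ) - (x ⬝ᵥ x : ℤ) : ℚ) = 8 * m := by linarith
  exact ⟨m, by exact_mod_cast heq⟩

theorem IsCharacteristic.add_mem (hsd : (C : Set (Fin n → ZMod 4)) = dualZ4 C)
    {w x : Fin n → ℤ} (hw : IsCharacteristic C w) (hx : x ∈ integerLift C) :
    IsCharacteristic C (w + x) := fun y hy ↦ by
  have hxy : 4 ∣ x ⬝ᵥ y := (mem_integerLift_iff_of_selfDual hsd).1 hx y hy
  have hwy := hw y hy
  rw [add_dotProduct]
  omega

variable {B : Submodule (ZMod 2) (Fin n → ZMod 2)}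

theorem IsCharacteristic.reduce_add_one_mem (hsd : (C : Set (Fin n → ZMod 4)) = dualZ4 C)
    (hB : (B : Set (Fin n → ZMod 2)) = residueCode C) {w : Fin n → ℤ}
    (hw : IsCharacteristic C w) : reduce 2 w + 1 ∈ B := by
  refine mem_of_forall_dotProduct_eq_zero fun t ht ↦ ?_
  have htor : t ∈ torsionCode C := (torsionCode_eq_dualCode hsd hB).superset ht
  have hsq : t ⬝ᵥ 1 = t ⬝ᵥ t := by
    have hidem : ∀ a : ZMod 2, a * 1 = a * a := by decide
    exact Finset.sum_congr rfl fun i _ ↦ hidem (t i)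
  have hdvd : ((2 : ℕ) : ℤ) ∣ binaryLift t ⬝ᵥ (w + binaryLift t) := by
    have h8 := hw _ (two_nsmul_binaryLift_mem_integerLift htor)
    rw [two_nsmul_dotProduct_self, dotProduct_smul, nsmul_eq_mul] at h8
    rw [dotProduct_add, dotProduct_comm _ w]
    omega
  rw [dvd_dotProduct_iff, map_add, reduce_binaryLift] at hdvd
  rwa [dotProduct_add, hsq, ← dotProduct_add]

theorem IsCharacteristic.eight_dvd_dotProduct_self_sub
    (hsd : (C : Set (Fin n → ZMod 4)) = dualZ4 C) (hB : (B : Set (Fin n → ZMod 2)) = residueCode C)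
    {w : Fin n → ℤ} (hw : IsCharacteristic C w) : 8 ∣ w ⬝ᵥ w - n := by
  obtain ⟨x, hx, hxw⟩ := mem_residueCode_iff.1 (hB.subset (hw.reduce_add_one_mem hsd hB))
  have hodd : reduce 2 (w - x) = 1 := by
    have hflip : ∀ a : ZMod 2, a - (a + 1) = 1 := by decide
    rw [map_sub, hxw]
    exact funext fun i ↦ hflip _
  have hz := eight_dvd_dotProduct_self_sub_card hodd
  have hwx := hw x hx
  rw [Fintype.card_fin, sub_dotProduct, dotProduct_sub, dotProduct_sub, dotProduct_comm x w] at hz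
  omega

theorem IsCharacteristic.exists_le_add_hammingNorm
    (hsd : (C : Set (Fin n → ZMod 4)) = dualZ4 C) (hB : (B : Set (Fin n → ZMod 2)) = residueCode C)
    {w : Fin n → ℤ} (hw : IsCharacteristic C w) : ∃ b ∈ B, n ≤ w ⬝ᵥ w + hammingNorm b := by
  refine ⟨_, hw.reduce_add_one_mem hsd hB, ?_⟩
  have hcard := hammingNorm_add_one (reduce 2 w)
  have hle := hammingNorm_reduce_le w
  rw [Fintype.card_fin] at hcard
  omega

theorem exists_isCharacteristic_reduce_eq (hsd : (C : Set (Fin n → ZMod 4)) = dualZ4 C)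
    (hB : (B : Set (Fin n → ZMod 2)) = residueCode C) {b : Fin n → ZMod 2} (hb : b ∈ B) :
    ∃ w, IsCharacteristic C w ∧ reduce 2 w = b + 1 := by
  obtain ⟨w, hw⟩ := exists_isCharacteristic hsd
  obtain ⟨x, hx, hxw⟩ := mem_residueCode_iff.1
    (hB.subset (B.add_mem (hw.reduce_add_one_mem hsd hB) hb))
  have hcancel : ∀ a c : ZMod 2, a + (a + 1 + c) = c + 1 := by decide
  refine ⟨w + x, hw.add_mem hsd hx, ?_⟩
  rw [map_add, hxw]
  exact funext fun i ↦ hcancel _ _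

theorem IsCharacteristic.half_dotProduct_eq_zero (hsd : (C : Set (Fin n → ZMod 4)) = dualZ4 C)
    (hB : (B : Set (Fin n → ZMod 2)) = residueCode C) {w : Fin n → ℤ}
    (hw : IsCharacteristic C w) {b : Fin n → ZMod 2} (hwb : reduce 2 w = b + 1)
    (h8 : 8 ∣ hammingNorm b) : reduce 2 (fun i ↦ w i / 2) ⬝ᵥ b = 0 := by
  have hnorm := hw.eight_dvd_dotProduct_self_sub hsd hB
  have hhalf := eight_dvd_dotProduct_self_sub_half_dotProduct hwb
  rw [Fintype.card_fin] at hhalf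
  have heven : ((2 : ℕ) : ℤ) ∣ (fun i ↦ w i / 2) ⬝ᵥ binaryLift b := by omega
  rwa [dvd_dotProduct_iff, reduce_binaryLift] at heven

-- `w / 2` is orthogonal to the only nonzero word of `B` supported in the support of `b`, so on
-- that support it agrees modulo `2` with a word of `B⊥`.
theorem exists_isCharacteristic_four_dvd (hsd : (C : Set (Fin n → ZMod 4)) = dualZ4 C)
    (hB : (B : Set (Fin n → ZMod 2)) = residueCode C) {b : Fin n → ZMod 2} (hb : b ∈ B)
    (hmin : HasMinWeight (B : Set (Fin n → ZMod 2)) (hammingNorm b)) (h8 : 8 ∣ hammingNorm b) :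
    ∃ w, IsCharacteristic C w ∧ reduce 2 w = b + 1 ∧ ∀ i, reduce 2 w i = 0 → 4 ∣ w i := by
  obtain ⟨w, hw, hwb⟩ := exists_isCharacteristic_reduce_eq hsd hB hb
  let k : Fin n → ZMod 2 := reduce 2 fun i ↦ w i / 2
  obtain ⟨t, ht, htk⟩ : ∃ t, (∀ c ∈ B, t ⬝ᵥ c = 0) ∧ Set.EqOn t k {i | b i ≠ 0} := by
    refine exists_dotProduct_eq_zero_and_eqOn fun c hc hsupp ↦ ?_
    by_cases hc0 : c = 0
    · rw [hc0, dotProduct_zero]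
    · obtain rfl := eq_of_support_subset_of_hammingNorm_le
        (fun i hi ↦ hsupp i (not_not.2 hi)) (hmin.2 ⟨c, hc, hc0, rfl⟩)
      exact hw.half_dotProduct_eq_zero hsd hB hwb h8
  have htor : t ∈ torsionCode C := (torsionCode_eq_dualCode hsd hB).superset ht
  have hreduce : reduce 2 (w + 2 • binaryLift t) = b + 1 := by
    rw [map_add, hwb, reduce_eq_zero_iff_exists.2 ⟨_, rfl⟩, add_zero]
  refine ⟨_, hw.add_mem hsd (two_nsmul_binaryLift_mem_integerLift htor), hreduce, fun i hi ↦ ?_⟩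
  have hwi : (w i : ZMod 2) = 0 := by rw [← reduce_apply, hwb, ← hreduce, hi]
  have hbi : b i ≠ 0 := fun h ↦ by
    simpa [h] using (congrFun hreduce i).symm.trans hi
  have hsum : ((w i / 2 + binaryLift t i : ℤ) : ZMod 2) = 0 := by
    have hlift : (binaryLift t i : ZMod 2) = ((w i / 2 : ℤ) : ZMod 2) :=
      (congrFun (reduce_binaryLift t) i).trans (htk hbi)
    rw [Int.cast_add, hlift, CharTwo.add_self_eq_zero]
  rw [ZMod.intCast_eq_zero_iff_even] at hwi hsum
  obtain ⟨l, hl⟩ := hwi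
  obtain ⟨m, hm⟩ := hsum
  refine ⟨m, ?_⟩
  rw [Pi.add_apply, Pi.smul_apply, two_nsmul]
  omega

theorem exists_isCharacteristic_dotProduct_self_eq (hsd : (C : Set (Fin n → ZMod 4)) = dualZ4 C)
    (hB : (B : Set (Fin n → ZMod 2)) = residueCode C) {d : ℕ}
    (hmin : HasMinWeight (B : Set (Fin n → ZMod 2)) d) (h8 : 8 ∣ d) :
    ∃ w, IsCharacteristic C w ∧ w ⬝ᵥ w = n - d := by
  obtain ⟨b, hb, -, rfl⟩ := hmin.1
  obtain ⟨w, hw, hwb, hfour⟩ := exists_isCharacteristic_four_dvd hsd hB hb hmin h8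
  obtain ⟨y, hy⟩ := exists_dotProduct_self_eq_hammingNorm_reduce hfour
  refine ⟨_, hw.add_mem hsd (four_nsmul_mem_integerLift y), ?_⟩
  have hcard := hammingNorm_add_one b
  rw [Fintype.card_fin] at hcard
  rw [hy, hwb]
  omega

theorem isLeast_dotProduct_self_isCharacteristic (hsd : (C : Set (Fin n → ZMod 4)) = dualZ4 C)
    (hB : (B : Set (Fin n → ZMod 2)) = residueCode C) {d : ℕ}
    (hmin : HasMinWeight (B : Set (Fin n → ZMod 2)) d) (h8 : 8 ∣ d)
    (hlt : ∀ b ∈ B, hammingNorm b < d + 8) :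
    IsLeast {m | ∃ w, IsCharacteristic C w ∧ w ⬝ᵥ w = m} (n - d : ℤ) := by
  refine ⟨exists_isCharacteristic_dotProduct_self_eq hsd hB hmin h8, ?_⟩
  rintro _ ⟨w, hw, rfl⟩
  obtain ⟨b, hb, hwb⟩ := hw.exists_le_add_hammingNorm hsd hB
  have hmod := hw.eight_dvd_dotProduct_self_sub hsd hB
  have hb' := hlt b hb
  omega

end Characteristic

theorem constructionA4_length36 {C : Submodule (ZMod 4) (Fin 36 → ZMod 4)}
    (hsd : (C : Set (Fin 36 → ZMod 4)) = dualZ4 C)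
    (hres : ∃ B : Submodule (ZMod 2) (Fin 36 → ZMod 2),
      (B : Set (Fin 36 → ZMod 2)) = residueCode C ∧
      Module.finrank (ZMod 2) B = 6 ∧ IsDoublyEven B ∧
      HasMinWeight (B : Set (Fin 36 → ZMod 2)) 16)
    (htor : HasMinWeight (torsionCode C) 3) :
    IsUnimodularLattice (constructionA4 C) ∧ IsOddLattice (constructionA4 C) ∧
      HasMinNorm (constructionA4 C) 3 ∧ HasSigma (constructionA4 C) 20 := by
  obtain ⟨B, hB, hrank, heven, hmin⟩ := hres
  have hminnorm : HasMinNorm (constructionA4 C) (3 : ℕ) :=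
    hasMinNorm_constructionA4 (hB ▸ hmin) htor (by norm_num) (by norm_num)
  have hodd : IsOddLattice (constructionA4 C) := hminnorm.isOddLattice (by decide)
  have hdual : HasMinWeight (dualCode B) 3 := torsionCode_eq_dualCode hsd hB ▸ htor
  have hlt (b : Fin 36 → ZMod 2) (hb : b ∈ B) : hammingNorm b < 16 + 8 := by
    rcases eq_or_ne b 0 with rfl | hb0
    · simp
    · have := hammingNorm_eq_of_isDoublyEven hrank heven
        (fun i j ↦ exists_ne_of_hasMinWeight_dualCode hdual le_rfl) hb hb0
      omega
  have hleast := isLeast_dotProduct_self_isCharacteristic hsd hB hmin (by norm_num) hlt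
  refine ⟨isUnimodularLattice_constructionA4 hsd, hodd, hminnorm, ?_⟩
  exact hasSigma_constructionA4 hsd hodd hleast
end
end
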